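/- arXiv:quant-ph/0308088 — 4 statements merged into one kernel-verified Lean document; each statement's English description precedes it below -/
import Mathlib

section
/- Let |ψ⟩ be a unit vector in H_A ⊗ H_B and ρ^{AB} = |ψ⟩⟨ψ| the corresponding pure state. Then every extension of ρ^{AB} is of the form ρ^{AB} ⊗ ρ^E, and the squashed entanglement of ρ^{AB} equals the entropy of entanglement of |ψ⟩, i.e. E_sq(|ψ⟩⟨ψ|) = S(Tr_B |ψ⟩⟨ψ|). -/
open Matrix BigOperators Kronecker
open scoped Classical ComplexOrder

noncomputable section

/-- A (quantum) state: positive semidefinite matrix of trace 1. -/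
def IsState {n : Type*} [Fintype n] (ρ : Matrix n n ℂ) : Prop :=
  ρ.PosSemidef ∧ ρ.trace = 1

/-- Von Neumann entropy (base 2), via the eigenvalues of a Hermitian matrix. -/
def vonNeumannEntropy {n : Type*} [Fintype n] (ρ : Matrix n n ℂ) : ℝ :=
  if h : ρ.IsHermitian then ∑ i, -(h.eigenvalues i * Real.logb 2 (h.eigenvalues i)) else 0

/-- Partial trace over the second (right) factor. -/
def ptraceR {A B : Type*} [Fintype A] [Fintype B]
    (ρ : Matrix (A × B) (A × B) ℂ) : Matrix A A ℂ :=
  fun i j => ∑ b, ρ (i, b) (j, b)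

/-- Partial trace over the first (left) factor. -/
def ptraceL {A B : Type*} [Fintype A] [Fintype B]
    (ρ : Matrix (A × B) (A × B) ℂ) : Matrix B B ℂ :=
  fun i j => ∑ a, ρ (a, i) (a, j)

variable {A B E : Type*} [Fintype A] [Fintype B] [Fintype E]

/-- Marginal of a tripartite state on `A × E` (trace out `B`). -/
def margAE (ρ : Matrix (A × B × E) (A × B × E) ℂ) : Matrix (A × E) (A × E) ℂ :=
  fun x y => ∑ b, ρ (x.1, b, x.2) (y.1, b, y.2)

/-- Marginal of a tripartite state on `B × E` (trace out `A`). -/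
def margBE (ρ : Matrix (A × B × E) (A × B × E) ℂ) : Matrix (B × E) (B × E) ℂ :=
  fun x y => ∑ a, ρ (a, x.1, x.2) (a, y.1, y.2)

/-- Marginal of a tripartite state on `E` (trace out `A` and `B`). -/
def margE (ρ : Matrix (A × B × E) (A × B × E) ℂ) : Matrix E E ℂ :=
  fun x y => ∑ a, ∑ b, ρ (a, b, x) (a, b, y)

/-- Marginal of a tripartite state on `A × B` (trace out `E`). -/
def margAB (ρ : Matrix (A × B × E) (A × B × E) ℂ) : Matrix (A × B) (A × B) ℂ :=
  fun x y => ∑ e, ρ (x.1, x.2, e) (y.1, y.2, e)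

/-- Quantum conditional mutual information `I(A;B|E) = S(AE)+S(BE)-S(ABE)-S(E)`. -/
def condMutualInfo (ρ : Matrix (A × B × E) (A × B × E) ℂ) : ℝ :=
  vonNeumannEntropy (margAE ρ) + vonNeumannEntropy (margBE ρ)
    - vonNeumannEntropy ρ - vonNeumannEntropy (margE ρ)

/-- Squashed entanglement: infimum of `(1/2) I(A;B|E)` over all finite-dimensional
extensions of `ρ`. -/
def Esq {A B : Type*} [Fintype A] [Fintype B] (ρ : Matrix (A × B) (A × B) ℂ) : ℝ :=
  sInf { x : ℝ | ∃ (d : ℕ) (ρE : Matrix (A × B × Fin d) (A × B × Fin d) ℂ),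
    IsState ρE ∧ margAB ρE = ρ ∧ x = (1 / 2) * condMutualInfo ρE }

/-- Outer product `|ψ⟩⟨ψ|`. -/
def outer {n : Type*} (ψ : n → ℂ) : Matrix n n ℂ :=
  Matrix.vecMulVec ψ (star ψ)

/-- Trace norm of a Hermitian matrix: sum of the absolute values of its eigenvalues. -/
def traceNorm {n : Type*} [Fintype n] (X : Matrix n n ℂ) : ℝ :=
  if h : X.IsHermitian then ∑ i, |h.eigenvalues i| else 0

/-- Entanglement of formation: infimum of average entanglement entropy over all
finite pure-state ensembles for `ρ`. -/
def EoF {A B : Type*} [Fintype A] [Fintype B] (ρ : Matrix (A × B) (A × B) ℂ) : ℝ :=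
  sInf { x : ℝ | ∃ (n : ℕ) (p : Fin n → ℝ) (ψ : Fin n → A × B → ℂ),
    (∀ k, 0 ≤ p k) ∧ (∑ k, p k) = 1 ∧ (∀ k, ∑ i, ‖ψ k i‖ ^ 2 = 1) ∧
    (∑ k, (p k : ℂ) • outer (ψ k)) = ρ ∧
    x = ∑ k, p k * vonNeumannEntropy (ptraceR (outer (ψ k))) }

/-- The function `η` : `η(x) = -x log₂ x` for `x ≤ 1/4`, `1/2` otherwise. -/
def eta (x : ℝ) : ℝ := if x ≤ 1 / 4 then -(x * Real.logb 2 x) else 1 / 2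

/-- The entropy function on complex numbers (through the real part). -/
def entF (z : ℂ) : ℝ := -(z.re * Real.logb 2 z.re)

lemma entropy_eq_roots {n : Type*} [Fintype n] [inst : DecidableEq n] (ρ : Matrix n n ℂ)
    (h : ρ.IsHermitian) : vonNeumannEntropy ρ = (ρ.charpoly.roots.map entF).sum := by
  have : inst = (fun a b => Classical.propDecidable (a = b)) := Subsingleton.elim _ _
  subst this
  rw [vonNeumannEntropy, dif_pos h, h.roots_charpoly_eq_eigenvalues, Multiset.map_map]
  simp [entF, Finset.sum_map_val]

lemma roots_entF_X_pow_mul (k : ℕ) (p : Polynomial ℂ) (hp : p ≠ 0) :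
    ((Polynomial.X ^ k * p).roots.map entF).sum = (p.roots.map entF).sum := by
  rw [Polynomial.roots_mul (mul_ne_zero (pow_ne_zero _ Polynomial.X_ne_zero) hp)]
  simp [entF, Multiset.map_nsmul, Multiset.sum_nsmul]

lemma entropy_mul_comm {m n : Type*} [Fintype m] [Fintype n]
    (M : Matrix m n ℂ) (N : Matrix n m ℂ) (h1 : (M * N).IsHermitian) (h2 : (N * M).IsHermitian) :
    vonNeumannEntropy (M * N) = vonNeumannEntropy (N * M) := by
  rw [entropy_eq_roots _ h1, entropy_eq_roots _ h2,
    ← roots_entF_X_pow_mul (Fintype.card n) _ (charpoly_monic _).ne_zero, charpoly_mul_comm',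
    roots_entF_X_pow_mul _ _ (charpoly_monic _).ne_zero]

lemma entropy_transpose {n : Type*} [Fintype n] (M : Matrix n n ℂ) (h : M.IsHermitian) :
    vonNeumannEntropy Mᵀ = vonNeumannEntropy M := by
  rw [entropy_eq_roots _ h, entropy_eq_roots _ h.transpose, charpoly_transpose]

lemma entropy_reindex {m n : Type*} [Fintype m] [Fintype n] (e : m ≃ n) (M : Matrix m m ℂ)
    (h : M.IsHermitian) :
    vonNeumannEntropy (Matrix.reindex e e M) = vonNeumannEntropy M := by
  rw [entropy_eq_roots _ h, entropy_eq_roots _ (by exact h.submatrix _), charpoly_reindex]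

lemma isHermitian_kron {m n : Type*} (M : Matrix m m ℂ)
    (N : Matrix n n ℂ) (hM : M.IsHermitian) (hN : N.IsHermitian) : (M ⊗ₖ N).IsHermitian := by
  rw [IsHermitian, conjTranspose_kronecker, hM.eq, hN.eq]

lemma entF_ofReal_mul (a b : ℝ) :
    entF ((a : ℂ) * (b : ℂ)) = b * entF a + a * entF b := by
  rw [← Complex.ofReal_mul]
  simp only [entF, Complex.ofReal_re]
  rcases eq_or_ne a 0 with rfl | ha
  · simp
  rcases eq_or_ne b 0 with rfl | hb
  · simp
  rw [Real.logb_mul ha hb]; ring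

lemma entropy_diag_form {n : Type*} [Fintype n] [DecidableEq n] (M U V : Matrix n n ℂ)
    (a : n → ℂ) (hUV : V * U = 1) (hM : M = U * diagonal a * V) (h : M.IsHermitian) :
    vonNeumannEntropy M = ∑ i, entF (a i) := by
  have hc : M.charpoly = ∏ i, (Polynomial.X - Polynomial.C (a i)) := by
    rw [hM, charpoly_mul_comm, ← mul_assoc, hUV, one_mul, charpoly_diagonal]
  rw [entropy_eq_roots _ h, hc, Polynomial.roots_prod]
  · simp
  · simp [Finset.prod_ne_zero_iff, Polynomial.X_sub_C_ne_zero]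

lemma exists_diag_form {n : Type*} [Fintype n] [DecidableEq n] (M : Matrix n n ℂ)
    (h : M.IsHermitian) : ∃ (U V : Matrix n n ℂ) (a : n → ℝ), V * U = 1 ∧
      M = U * diagonal (fun i => (a i : ℂ)) * V ∧ M.trace = ((∑ i, a i : ℝ) : ℂ) := by
  refine ⟨h.eigenvectorUnitary, star (h.eigenvectorUnitary : Matrix n n ℂ), h.eigenvalues,
    by simp, ?_, ?_⟩
  · conv_lhs => rw [h.spectral_theorem, Unitary.conjStarAlgAut_apply]
    rfl
  · rw [h.trace_eq_sum_eigenvalues]; simp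

lemma entropy_kron {m n : Type*} [Fintype m] [Fintype n] (M : Matrix m m ℂ)
    (N : Matrix n n ℂ) (hM : M.IsHermitian) (hN : N.IsHermitian)
    (tM : M.trace = 1) (tN : N.trace = 1) :
    vonNeumannEntropy (M ⊗ₖ N) = vonNeumannEntropy M + vonNeumannEntropy N := by
  obtain ⟨U, V, a, h1, h2, h3⟩ := exists_diag_form M hM
  obtain ⟨U', V', b, h1', h2', h3'⟩ := exists_diag_form N hN
  have sa : ∑ i, a i = 1 := by rw [tM] at h3; exact_mod_cast h3.symm
  have sb : ∑ i, b i = 1 := by rw [tN] at h3'; exact_mod_cast h3'.symm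
  rw [entropy_diag_form M U V _ h1 h2 hM, entropy_diag_form N U' V' _ h1' h2' hN,
    entropy_diag_form (M ⊗ₖ N) (U ⊗ₖ U') (V ⊗ₖ V') (fun x => (a x.1 : ℂ) * (b x.2 : ℂ))
      (by rw [← mul_kronecker_mul, h1, h1', one_kronecker_one])
      (by rw [← diagonal_kronecker_diagonal (fun i => (a i : ℂ)) (fun i => (b i : ℂ)), ← mul_kronecker_mul, ← mul_kronecker_mul, ← h2, ← h2'])
      (isHermitian_kron M N hM hN)]
  simp only [entF_ofReal_mul, Fintype.sum_prod_type, Finset.sum_add_distrib]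
  simp only [← Finset.sum_mul, ← Finset.mul_sum, sa, sb, one_mul]

lemma outer_isHermitian {n : Type*} (ψ : n → ℂ) : (outer ψ).IsHermitian := by
  ext i j; simp [outer, vecMulVec_apply, mul_comm]

lemma unit_star {n : Type*} [Fintype n] (ψ : n → ℂ) (hψ : ∑ i, ‖ψ i‖ ^ 2 = 1) :
    ∑ i, star (ψ i) * ψ i = 1 := by
  have : ((∑ i, ‖ψ i‖ ^ 2 : ℝ) : ℂ) = 1 := by rw [hψ]; simp
  rw [← this]; push_cast
  exact Finset.sum_congr rfl fun i _ => Complex.conj_mul' _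

lemma entropy_outer_kron {n E : Type*} [Fintype n] [Fintype E] (ψ : n → ℂ)
    (hψ : ∑ i, star (ψ i) * ψ i = 1) (σ : Matrix E E ℂ) (hσ : σ.IsHermitian) :
    vonNeumannEntropy (outer ψ ⊗ₖ σ) = vonNeumannEntropy σ := by
  let V : Matrix (n × E) E ℂ := Matrix.of fun x f => ψ x.1 * (if x.2 = f then 1 else 0)
  have hV : Vᴴ * V = 1 := by
    ext e f
    simp only [V, mul_apply, conjTranspose_apply, of_apply, Fintype.sum_prod_type, one_apply]
    rw [Finset.sum_comm]
    by_cases h : e = f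
    · subst h
      rw [if_pos rfl, Finset.sum_eq_single e]
      · simpa using hψ
      · intro b _ hb; simp [hb]
      · simp
    · rw [if_neg h]
      refine Finset.sum_eq_zero fun b _ => Finset.sum_eq_zero fun i _ => ?_
      by_cases hb : b = e
      · subst hb; simp [h]
      · simp [hb]
  have h1 : outer ψ ⊗ₖ σ = V * (σ * Vᴴ) := by
    ext ⟨i, e⟩ ⟨j, f⟩
    simp [V, mul_apply, outer, vecMulVec_apply, kroneckerMap_apply, apply_ite, Finset.sum_ite_eq]
    ring
  have h2 : σ * Vᴴ * V = σ := by rw [Matrix.mul_assoc, hV, Matrix.mul_one]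
  have h3 := isHermitian_kron _ _ (outer_isHermitian ψ) hσ
  rw [h1] at h3 ⊢
  rw [entropy_mul_comm _ _ h3 (by rw [h2]; exact hσ), h2]

lemma ext_form {n E : Type*} [Fintype n] [Fintype E] (ρ : Matrix (n × E) (n × E) ℂ)
    (hρ : ρ.PosSemidef) (ψ : n → ℂ) (hψ : ∑ i, star (ψ i) * ψ i = 1)
    (h : ∀ i j, ∑ e, ρ (i, e) (j, e) = ψ i * star (ψ j)) :
    ∃ σ : Matrix E E ℂ, ρ = outer ψ ⊗ₖ σ := by
  have key : ∀ φ : n → ℂ, ∑ i, star (φ i) * ψ i = 0 →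
      ∀ i f e, ∑ j, ρ (i, f) (j, e) * φ j = 0 := by
    intro φ hφ
    let x : E → n × E → ℂ := fun e y => if y.2 = e then φ y.1 else 0
    have hx : ∀ e y, (ρ *ᵥ x e) y = ∑ j, ρ y (j, e) * φ j := by
      intro e y
      simp [x, mulVec, dotProduct, Fintype.sum_prod_type]
    have hq : ∀ e, star (x e) ⬝ᵥ ρ *ᵥ x e = ∑ i, ∑ j, star (φ i) * (ρ (i, e) (j, e) * φ j) := by
      intro e
      simp only [dotProduct, hx, Fintype.sum_prod_type, Finset.mul_sum]
      refine Finset.sum_congr rfl fun i _ => ?_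
      rw [Finset.sum_eq_single e]
      · simp [x]
      · intro b _ hb; simp [x, hb]
      · simp
    have hs : ∑ e, star (x e) ⬝ᵥ ρ *ᵥ x e = 0 := by
      simp only [hq]
      rw [Finset.sum_comm]
      have : ∀ i, ∑ e, ∑ j, star (φ i) * (ρ (i, e) (j, e) * φ j) =
          (star (φ i) * ψ i) * ∑ j, star (ψ j) * φ j := by
        intro i
        rw [Finset.sum_comm, Finset.mul_sum]
        refine Finset.sum_congr rfl fun j _ => ?_
        rw [← Finset.mul_sum, ← Finset.sum_mul, h]; ring
      simp only [this, ← Finset.sum_mul, hφ, zero_mul]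
    intro i f e
    have h0 := (Finset.sum_eq_zero_iff_of_nonneg
      (fun e _ => hρ.dotProduct_mulVec_nonneg (x e))).1 hs e (Finset.mem_univ _)
    have := (hρ.dotProduct_mulVec_zero_iff _).1 h0
    rw [← hx, this]; rfl
  have k2 : ∀ i f k e, ρ (i, f) (k, e) = star (ψ k) * ∑ j, ρ (i, f) (j, e) * ψ j := by
    intro i f k e
    have := key (fun j => (if j = k then 1 else 0) - star (ψ k) * ψ j) (by
      simp only [star_sub, star_mul, star_star, sub_mul, Finset.sum_sub_distrib]
      have : ∀ j, star (ψ j) * ψ k * ψ j = ψ k * (star (ψ j) * ψ j) := fun j => by ring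
      simp only [this, ← Finset.mul_sum, hψ]
      simp [apply_ite]) i f e
    simp only [mul_sub, Finset.sum_sub_distrib] at this
    rw [sub_eq_zero] at this
    simp only [mul_ite, mul_one, mul_zero, Finset.sum_ite_eq', Finset.sum_ite_eq,
      Finset.mem_univ, if_true] at this
    rw [this, Finset.mul_sum]
    exact Finset.sum_congr rfl fun j _ => by ring
  have k3 : ∀ i f k e, ρ (i, f) (k, e) = ψ i * star (∑ j, ρ (k, e) (j, f) * ψ j) := by
    intro i f k e
    have h1 := hρ.1.apply (i, f) (k, e)
    rw [← h1, k2 k e i f, star_mul, star_star, mul_comm]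
  refine ⟨fun f e => ∑ j, star (∑ l, ρ (j, e) (l, f) * ψ l) * ψ j, ?_⟩
  ext ⟨i, f⟩ ⟨k, e⟩
  rw [k2 i f k e]
  have : ∀ j, ρ (i, f) (j, e) * ψ j = ψ i * (star (∑ l, ρ (j, e) (l, f) * ψ l) * ψ j) := by
    intro j; rw [k3 i f j e]; ring
  simp only [this, ← Finset.mul_sum]
  change _ = ψ i * star (ψ k) * _
  ring

lemma margE_isState {A B E : Type*} [Fintype A] [Fintype B] [Fintype E]
    (ρ : Matrix (A × B × E) (A × B × E) ℂ) (h : IsState ρ) : IsState (margE ρ) := by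
  constructor
  · have : margE ρ = ∑ a, ∑ b, ρ.submatrix (fun e => (a, b, e)) (fun e => (a, b, e)) := by
      ext x y; simp [margE, Matrix.sum_apply]
    rw [this]
    exact posSemidef_sum _ fun a _ => posSemidef_sum _ fun b _ => h.1.submatrix _
  · rw [← h.2]
    simp only [trace, margE, diag_apply, Fintype.sum_prod_type]
    rw [Finset.sum_comm]
    exact Finset.sum_congr rfl fun a _ => Finset.sum_comm

/-- The product extension. -/
def prodExt {A B E : Type*} (ψ : A × B → ℂ) (σ : Matrix E E ℂ) :
    Matrix (A × B × E) (A × B × E) ℂ :=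
  Matrix.reindex (Equiv.prodAssoc A B E) (Equiv.prodAssoc A B E) (outer ψ ⊗ₖ σ)

lemma prodExt_apply {A B E : Type*} (ψ : A × B → ℂ) (σ : Matrix E E ℂ) (a b e a' b' e') :
    prodExt ψ σ (a, b, e) (a', b', e') = ψ (a, b) * star (ψ (a', b')) * σ e e' := rfl

lemma margE_prodExt {A B E : Type*} [Fintype A] [Fintype B] [Fintype E]
    (ψ : A × B → ℂ) (hψ : ∑ i, star (ψ i) * ψ i = 1) (σ : Matrix E E ℂ) :
    margE (prodExt ψ σ) = σ := by
  ext e f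
  simp only [margE, prodExt_apply, ← Finset.sum_mul]
  rw [Fintype.sum_prod_type] at hψ
  simp only [mul_comm (star _)] at hψ
  rw [hψ, one_mul]

lemma margAB_prodExt {A B E : Type*} [Fintype A] [Fintype B] [Fintype E]
    (ψ : A × B → ℂ) (σ : Matrix E E ℂ) (hσ : σ.trace = 1) :
    margAB (prodExt ψ σ) = outer ψ := by
  ext ⟨a, b⟩ ⟨a', b'⟩
  simp only [margAB, prodExt_apply, ← Finset.mul_sum]
  have : ∑ e, σ e e = 1 := hσ
  rw [this, mul_one]; rfl

lemma extension_form {A B E : Type*} [Fintype A] [Fintype B] [Fintype E]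
    (ψ : A × B → ℂ) (hψ : ∑ i, star (ψ i) * ψ i = 1)
    (ρ : Matrix (A × B × E) (A × B × E) ℂ) (h : IsState ρ) (hm : margAB ρ = outer ψ) :
    ∃ σ : Matrix E E ℂ, IsState σ ∧ ρ = prodExt ψ σ := by
  obtain ⟨σ, hσ⟩ := ext_form (ρ.submatrix (Equiv.prodAssoc A B E) (Equiv.prodAssoc A B E))
    (h.1.submatrix _) ψ hψ (fun i j => congrFun (congrFun hm i) j)
  have hρ : ρ = prodExt ψ σ := by
    rw [prodExt, ← hσ]
    ext x y; simp
  refine ⟨σ, ?_, hρ⟩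
  have := margE_isState ρ h
  rwa [hρ, margE_prodExt ψ hψ] at this

lemma condMutualInfo_prodExt {A B E : Type*} [Fintype A] [Fintype B] [Fintype E]
    (ψ : A × B → ℂ) (hψ : ∑ i, star (ψ i) * ψ i = 1)
    (σ : Matrix E E ℂ) (hσ : IsState σ) :
    condMutualInfo (prodExt ψ σ) = 2 * vonNeumannEntropy (ptraceR (outer ψ)) := by
  let M : Matrix A B ℂ := Matrix.of fun a b => ψ (a, b)
  have hR : ptraceR (outer ψ) = M * Mᴴ := by
    ext a a'; simp [ptraceR, outer, vecMulVec_apply, mul_apply, M]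
  have hL : ptraceL (outer ψ) = (Mᴴ * M)ᵀ := by
    ext a a'; simp [ptraceL, outer, vecMulVec_apply, mul_apply, M, mul_comm]
  have hRh : (M * Mᴴ).IsHermitian := isHermitian_mul_conjTranspose_self M
  have hLh : (Mᴴ * M).IsHermitian := isHermitian_conjTranspose_mul_self M
  have tR : (ptraceR (outer ψ)).trace = 1 := by
    rw [← hψ, Fintype.sum_prod_type]
    simp [trace, ptraceR, outer, vecMulVec_apply, mul_comm]
  have tL : (ptraceL (outer ψ)).trace = 1 := by
    rw [← hψ, Fintype.sum_prod_type_right]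
    simp [trace, ptraceL, outer, vecMulVec_apply, mul_comm]
  have hAE : margAE (prodExt ψ σ) = ptraceR (outer ψ) ⊗ₖ σ := by
    ext ⟨a, e⟩ ⟨a', e'⟩
    simp only [margAE, prodExt_apply, ← Finset.sum_mul]; rfl
  have hBE : margBE (prodExt ψ σ) = ptraceL (outer ψ) ⊗ₖ σ := by
    ext ⟨a, e⟩ ⟨a', e'⟩
    simp only [margBE, prodExt_apply, ← Finset.sum_mul]; rfl
  have hLR : vonNeumannEntropy (ptraceL (outer ψ)) = vonNeumannEntropy (ptraceR (outer ψ)) := by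
    rw [hL, hR, entropy_transpose _ hLh, entropy_mul_comm _ _ hLh hRh]
  rw [condMutualInfo, margE_prodExt ψ hψ, hAE, hBE,
    entropy_kron _ _ (hR ▸ hRh) hσ.1.1 tR hσ.2,
    entropy_kron _ _ (hL ▸ hLh.transpose) hσ.1.1 tL hσ.2, prodExt,
    entropy_reindex _ _ (isHermitian_kron _ _ (outer_isHermitian ψ) hσ.1.1),
    entropy_outer_kron ψ hψ σ hσ.1.1, hLR]
  ring

lemma prodExt_isState {A B E : Type*} [Fintype A] [Fintype B] [Fintype E]
    (ψ : A × B → ℂ) (hψ : ∑ i, star (ψ i) * ψ i = 1)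
    (σ : Matrix E E ℂ) (hσ : IsState σ) : IsState (prodExt ψ σ) := by
  constructor
  · exact ((posSemidef_vecMulVec_self_star ψ).kronecker hσ.1).submatrix _
  · have h1 : (prodExt ψ σ).trace = (margE (prodExt ψ σ)).trace := by
      simp only [trace, margE, diag_apply, Fintype.sum_prod_type]
      symm
      rw [Finset.sum_comm]
      exact Finset.sum_congr rfl fun a _ => Finset.sum_comm
    rw [h1, margE_prodExt ψ hψ, hσ.2]

/-- For a pure state `ρ^{AB} = |ψ⟩⟨ψ|`, every extension is of the form
`ρ^{AB} ⊗ ρ^E`, and the squashed entanglement equals the entropy of entanglement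
`S(Tr_B |ψ⟩⟨ψ|)`. -/
theorem pure_state_extensions_and_squashed_entanglement
    {A B : Type*} [Fintype A] [Fintype B]
    (ψ : A × B → ℂ) (hψ : ∑ i, ‖ψ i‖ ^ 2 = 1) :
    (∀ (d : ℕ) (ρE : Matrix (A × B × Fin d) (A × B × Fin d) ℂ),
        IsState ρE → margAB ρE = outer ψ →
        ∃ σ : Matrix (Fin d) (Fin d) ℂ, IsState σ ∧
          ρE = Matrix.reindex (Equiv.prodAssoc A B (Fin d)) (Equiv.prodAssoc A B (Fin d))
                 (outer ψ ⊗ₖ σ)) ∧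
    Esq (outer ψ) = vonNeumannEntropy (ptraceR (outer ψ)) := by
  have hψ' := unit_star ψ hψ
  refine ⟨fun d ρE h hm => extension_form ψ hψ' ρE h hm, ?_⟩
  have hset : { x : ℝ | ∃ (d : ℕ) (ρE : Matrix (A × B × Fin d) (A × B × Fin d) ℂ),
      IsState ρE ∧ margAB ρE = outer ψ ∧ x = (1 / 2) * condMutualInfo ρE } =
      {vonNeumannEntropy (ptraceR (outer ψ))} := by
    ext x
    simp only [Set.mem_ofPred_eq, Set.mem_singleton_iff]
    constructor
    · rintro ⟨d, ρE, h, hm, rfl⟩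
      obtain ⟨σ, hσ, rfl⟩ := extension_form ψ hψ' ρE h hm
      rw [condMutualInfo_prodExt ψ hψ' σ hσ]; ring
    · rintro rfl
      have hσ : IsState (1 : Matrix (Fin 1) (Fin 1) ℂ) := ⟨PosSemidef.one, by simp⟩
      refine ⟨1, prodExt ψ 1, prodExt_isState ψ hψ' _ hσ, margAB_prodExt ψ _ hσ.2, ?_⟩
      rw [condMutualInfo_prodExt ψ hψ' _ hσ]; ring
  rw [Esq, hset, csInf_singleton]

end
end

section
/- Squashed entanglement is convex: for any two states ρ^{AB}, σ^{AB} on H_A ⊗ H_B and any 0 ≤ λ ≤ 1, E_sq(λ ρ^{AB} + (1-λ) σ^{AB}) ≤ λ E_sq(ρ^{AB}) + (1-λ) E_sq(σ^{AB}). -/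
open Matrix BigOperators Kronecker
open scoped Classical ComplexOrder

noncomputable section

variable {A B E : Type*} [Fintype A] [Fintype B] [Fintype E]

namespace SqConv

/-- The function `-x log₂ x`. -/
def ff (x : ℝ) : ℝ := -(x * Real.logb 2 x)

lemma ff_eq (x : ℝ) : ff x = (Real.log 2)⁻¹ * Real.negMulLog x := by
  unfold ff Real.negMulLog Real.logb
  ring

lemma ff_zero : ff 0 = 0 := by simp [ff]

lemma ff_mul (x y : ℝ) : ff (x * y) = y * ff x + x * ff y := by
  simp only [ff_eq, Real.negMulLog_mul]; ring

lemma ff_concave : ConcaveOn ℝ (Set.Ici (0 : ℝ)) ff := by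
  have h := Real.concaveOn_negMulLog.smul (c := (Real.log 2)⁻¹)
    (inv_nonneg.2 (Real.log_nonneg (by norm_num)))
  have : ff = fun x => (Real.log 2)⁻¹ • Real.negMulLog x := by
    funext x; simp [ff_eq]
  rw [this]; exact h

lemma ff_sum_le {Y : Type*} [Fintype Y] [Nonempty Y] (q : Y → ℝ) (hq : ∀ y, 0 ≤ q y) :
    ∑ y, ff (q y) ≤ ff (∑ y, q y) + (∑ y, q y) * Real.logb 2 (Fintype.card Y) := by
  have hc : (0 : ℝ) < Fintype.card Y := by exact_mod_cast Fintype.card_pos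
  have h := ff_concave.le_map_sum (t := Finset.univ) (w := fun _ : Y => (Fintype.card Y : ℝ)⁻¹)
    (p := q) (fun _ _ => by positivity) (by simp) (fun i _ => hq i)
  simp only [smul_eq_mul, ← Finset.mul_sum] at h
  rw [ff_mul] at h
  have e : ff ((Fintype.card Y : ℝ)⁻¹)
      = (Fintype.card Y : ℝ)⁻¹ * Real.logb 2 (Fintype.card Y) := by
    simp [ff, Real.logb_inv]
  rw [e] at h
  have h2 := mul_le_mul_of_nonneg_left h hc.le
  field_simp at h2
  linarith

section
variable {m n k : Type*} [Fintype m] [Fintype n] [Fintype k]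

/-- Entropy computed from a characteristic polynomial. -/
def pent (p : Polynomial ℂ) : ℝ := (p.roots.map (fun z => ff z.re)).sum

lemma pent_mul {p q : Polynomial ℂ} (hp : p ≠ 0) (hq : q ≠ 0) :
    pent (p * q) = pent p + pent q := by
  unfold pent
  rw [Polynomial.roots_mul (mul_ne_zero hp hq)]; simp

lemma pent_X_pow (k : ℕ) : pent (Polynomial.X ^ k) = 0 := by
  simp [pent, ff_zero, Multiset.map_nsmul, Multiset.sum_nsmul]

lemma S_eq {ρ : Matrix n n ℂ} (h : ρ.IsHermitian) :
    vonNeumannEntropy ρ = pent ρ.charpoly := by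
  unfold vonNeumannEntropy pent
  rw [dif_pos h, h.roots_charpoly_eq_eigenvalues]
  simp [ff]

lemma S_mul_comm (M : Matrix m n ℂ) :
    vonNeumannEntropy (M * Mᴴ) = vonNeumannEntropy (Mᴴ * M) := by
  rw [S_eq (isHermitian_mul_conjTranspose_self M), S_eq (isHermitian_conjTranspose_mul_self M)]
  have h := congrArg pent (Matrix.charpoly_mul_comm' M Mᴴ)
  rw [pent_mul (by simp) (charpoly_monic _).ne_zero,
    pent_mul (by simp) (charpoly_monic _).ne_zero, pent_X_pow, pent_X_pow] at h
  linarith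

lemma S_conj {ρ : Matrix n n ℂ} (h : ρ.IsHermitian) (U : Matrix n n ℂ) (hU : U * Uᴴ = 1) :
    vonNeumannEntropy (Uᴴ * ρ * U) = vonNeumannEntropy ρ := by
  rw [S_eq (isHermitian_conjTranspose_mul_mul U h), S_eq h, mul_assoc, charpoly_mul_comm,
    mul_assoc, hU, mul_one]

lemma S_submatrix {ρ : Matrix n n ℂ} (h : ρ.IsHermitian) (e : m ≃ n) :
    vonNeumannEntropy (ρ.submatrix e e) = vonNeumannEntropy ρ := by
  rw [S_eq (h.submatrix e), S_eq h, ← charpoly_reindex e.symm]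
  rfl

lemma S_blocks {ρ : Matrix n n ℂ} {σ : Matrix m m ℂ} (h : ρ.IsHermitian) (h' : σ.IsHermitian)
    (e : k ≃ n ⊕ m) :
    vonNeumannEntropy ((fromBlocks ρ 0 0 σ).submatrix e e)
      = vonNeumannEntropy ρ + vonNeumannEntropy σ := by
  have hb : (fromBlocks ρ 0 0 σ).IsHermitian := h.fromBlocks (by simp) h'
  rw [S_submatrix hb, S_eq hb, S_eq h, S_eq h',
    ← pent_mul (charpoly_monic _).ne_zero (charpoly_monic _).ne_zero]
  congr 1
  rw [← charpoly_fromBlocks_zero₁₂]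
  congr!

lemma S_diag (d : n → ℝ) :
    vonNeumannEntropy (diagonal (fun i => (d i : ℂ))) = ∑ i, ff (d i) := by
  have h : (diagonal (fun i => (d i : ℂ))).IsHermitian := by
    apply isHermitian_diagonal_of_self_adjoint
    ext i; simp
  rw [S_eq h, charpoly_diagonal]
  unfold pent
  rw [Polynomial.roots_prod _ _ (by
      simp [Finset.prod_ne_zero_iff, Polynomial.X_sub_C_ne_zero])]
  simp

/-- Spectral decomposition. -/
lemma spectral {ρ : Matrix n n ℂ} (h : ρ.IsHermitian) :
    ∃ (U : Matrix n n ℂ) (d : n → ℝ), U * Uᴴ = 1 ∧ Uᴴ * U = 1 ∧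
      ρ = U * diagonal (fun i => (d i : ℂ)) * Uᴴ ∧ (ρ.PosSemidef → ∀ i, 0 ≤ d i) := by
  refine ⟨h.eigenvectorUnitary, h.eigenvalues, ?_, ?_, ?_, ?_⟩
  · exact Unitary.mul_star_self_of_mem h.eigenvectorUnitary.2
  · exact Unitary.star_mul_self_of_mem h.eigenvectorUnitary.2
  · exact h.spectral_theorem
  · intro hp i; exact hp.eigenvalues_nonneg i

lemma S_spec (U : Matrix n n ℂ) (d : n → ℝ) (hU : Uᴴ * U = 1) :
    vonNeumannEntropy (U * diagonal (fun i => (d i : ℂ)) * Uᴴ) = ∑ i, ff (d i) := by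
  have h : (diagonal (fun i => (d i : ℂ))).IsHermitian := by
    apply isHermitian_diagonal_of_self_adjoint
    ext i; simp
  have := S_conj h Uᴴ (by simpa using hU)
  rw [conjTranspose_conjTranspose, S_diag] at this
  exact this

lemma S_smul {ρ : Matrix n n ℂ} (h : ρ.IsHermitian) (ht : ρ.trace = 1) (c : ℝ) :
    vonNeumannEntropy ((c : ℂ) • ρ) = c * vonNeumannEntropy ρ + ff c := by
  obtain ⟨U, d, h1, h2, h3, -⟩ := spectral h
  have hd : ∑ i, d i = 1 := by
    have : ρ.trace = ((∑ i, d i : ℝ) : ℂ) := by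
      rw [h3, trace_mul_comm, ← mul_assoc, h2, one_mul, trace_diagonal]; simp
    rw [ht] at this; exact_mod_cast this.symm
  have e : (c : ℂ) • ρ = U * diagonal (fun i => ((c * d i : ℝ) : ℂ)) * Uᴴ := by
    rw [h3, ← smul_mul_assoc, ← mul_smul_comm, ← diagonal_smul]
    congr! 4
    simp
  rw [e, S_spec _ _ h2]
  conv_rhs => rw [h3, S_spec _ _ h2]
  simp only [ff_mul, Finset.sum_add_distrib, ← Finset.sum_mul, ← Finset.mul_sum, hd]
  ring

lemma S_le_diag {ρ : Matrix n n ℂ} (h : ρ.PosSemidef) :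
    vonNeumannEntropy ρ ≤ ∑ i, ff (ρ i i).re := by
  obtain ⟨U, d, h1, h2, h3, h4⟩ := spectral h.isHermitian
  have h4 := h4 h
  have hS : vonNeumannEntropy ρ = ∑ i, ff (d i) := by rw [h3, S_spec _ _ h2]
  have hrow : ∀ i, ∑ j, Complex.normSq (U i j) = 1 := by
    intro i
    have := congrFun (congrFun h1 i) i
    simp only [mul_apply, conjTranspose_apply, one_apply_eq, RCLike.star_def,
      Complex.mul_conj] at this
    exact_mod_cast this
  have hcol : ∀ j, ∑ i, Complex.normSq (U i j) = 1 := by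
    intro j
    have := congrFun (congrFun h2 j) j
    simp only [mul_apply, conjTranspose_apply, one_apply_eq, RCLike.star_def,
      ← Complex.normSq_eq_conj_mul_self] at this
    exact_mod_cast this
  have hdiag : ∀ i, (ρ i i).re = ∑ j, Complex.normSq (U i j) * d j := by
    intro i
    have : ρ i i = ((∑ j, Complex.normSq (U i j) * d j : ℝ) : ℂ) := by
      rw [h3, mul_apply]
      push_cast
      refine Finset.sum_congr rfl fun j _ => ?_
      rw [mul_diagonal, conjTranspose_apply, RCLike.star_def, ← Complex.mul_conj]
      ring
    rw [this, Complex.ofReal_re]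
  rw [hS]
  calc ∑ j, ff (d j) = ∑ j, ∑ i, Complex.normSq (U i j) * ff (d j) := by
        simp only [← Finset.sum_mul, hcol, one_mul]
    _ = ∑ i, ∑ j, Complex.normSq (U i j) * ff (d j) := Finset.sum_comm
    _ ≤ ∑ i, ff (ρ i i).re := by
        refine Finset.sum_le_sum fun i _ => ?_
        rw [hdiag]
        exact ff_concave.le_map_sum (t := Finset.univ) (fun j _ => Complex.normSq_nonneg _)
          (hrow i) (fun j _ => h4 j)

end

section
variable {X Y : Type*} [Fintype X] [Fintype Y]

lemma ptraceL_psd {ρ : Matrix (Y × X) (Y × X) ℂ} (h : ρ.PosSemidef) : (ptraceL ρ).PosSemidef := by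
  have : ptraceL ρ = ∑ y, ρ.submatrix (fun x => (y, x)) (fun x => (y, x)) := by
    ext i j; simp [ptraceL, Matrix.sum_apply]
  rw [this]
  exact posSemidef_sum _ fun y _ => h.submatrix _

lemma ptraceL_trace (ρ : Matrix (Y × X) (Y × X) ℂ) : (ptraceL ρ).trace = ρ.trace := by
  simp only [Matrix.trace, diag_apply, ptraceL, Fintype.sum_prod_type]
  exact Finset.sum_comm

lemma S_le_ptrace [Nonempty Y] {ρ : Matrix (Y × X) (Y × X) ℂ} (h : ρ.PosSemidef)
    (ht : ρ.trace = 1) :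
    vonNeumannEntropy ρ ≤ vonNeumannEntropy (ptraceL ρ) + Real.logb 2 (Fintype.card Y) := by
  obtain ⟨U, d, h1, h2, h3, h4⟩ := spectral (ptraceL_psd h).isHermitian
  have hd : ∑ i, d i = 1 := by
    have : (ptraceL ρ).trace = ((∑ i, d i : ℝ) : ℂ) := by
      rw [h3, trace_mul_comm, ← mul_assoc, h2, one_mul, trace_diagonal]; simp
    rw [ptraceL_trace, ht] at this; exact_mod_cast this.symm
  let W : Matrix (Y × X) (Y × X) ℂ := (1 : Matrix Y Y ℂ) ⊗ₖ U
  have hW : W * Wᴴ = 1 := by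
    simp only [W, conjTranspose_kronecker, ← mul_kronecker_mul, h1, conjTranspose_one, one_mul]
    convert one_kronecker_one
  have hp : (Wᴴ * ρ * W).PosSemidef := h.conjTranspose_mul_mul_same W
  have hG : ∀ y i, (Wᴴ * ρ * W) (y, i) (y, i)
      = (Uᴴ * ρ.submatrix (fun x => (y, x)) (fun x => (y, x)) * U) i i := by
    intro y i
    simp [W, mul_apply, Fintype.sum_prod_type, kroneckerMap_apply, one_apply, ite_mul,
      apply_ite]
  have hsum : ∀ i, ∑ y, ((Wᴴ * ρ * W) (y, i) (y, i)).re = d i := by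
    intro i
    have e1 : ptraceL ρ = ∑ y, ρ.submatrix (fun x => (y, x)) (fun x => (y, x)) := by
      ext i j; simp [ptraceL, Matrix.sum_apply]
    have e2 : Uᴴ * ptraceL ρ * U = diagonal (fun i => (d i : ℂ)) := by
      rw [h3]
      calc _ = (Uᴴ * U) * diagonal (fun i => (d i : ℂ)) * (Uᴴ * U) := by
            simp only [mul_assoc]
        _ = _ := by rw [h2, one_mul, mul_one]
    have e3 := congrFun (congrFun e2 i) i
    rw [e1, Matrix.mul_sum, Matrix.sum_mul, Matrix.sum_apply, diagonal_apply_eq] at e3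
    simp only [hG, ← Complex.re_sum, e3, Complex.ofReal_re]
  rw [← S_conj h.isHermitian W (by convert hW)]
  refine (S_le_diag hp).trans ?_
  rw [h3, S_spec _ _ h2, Fintype.sum_prod_type, Finset.sum_comm]
  calc _ ≤ ∑ i, (ff (d i) + d i * Real.logb 2 (Fintype.card Y)) := by
        refine Finset.sum_le_sum fun i _ => ?_
        rw [← hsum i]
        exact ff_sum_le _ fun y => (Complex.le_def.1 hp.diag_nonneg).1
    _ = _ := by rw [Finset.sum_add_distrib, ← Finset.sum_mul, hd, one_mul]

lemma ptrace_le_S [Nonempty Y] {ρ : Matrix (Y × X) (Y × X) ℂ} (h : ρ.PosSemidef)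
    (ht : ρ.trace = 1) :
    vonNeumannEntropy (ptraceL ρ) ≤ vonNeumannEntropy ρ + Real.logb 2 (Fintype.card Y) := by
  obtain ⟨U, d, h1, h2, h3, h4⟩ := spectral h.isHermitian
  have h4 := h4 h
  let M : Matrix (Y × X) (Y × X) ℂ := U * diagonal (fun i => ((Real.sqrt (d i) : ℝ) : ℂ))
  have hM : M * Mᴴ = ρ := by
    rw [h3]
    simp only [M, conjTranspose_mul, diagonal_conjTranspose]
    rw [← mul_assoc, mul_assoc U, diagonal_mul_diagonal]
    congr! 4 with i
    simp only [Pi.star_apply, RCLike.star_def, Complex.conj_ofReal]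
    rw [← Complex.ofReal_mul, Real.mul_self_sqrt (h4 i)]
  let N : Matrix X (Y × (Y × X)) ℂ := Matrix.of fun x p => M (p.1, x) p.2
  have hN : N * Nᴴ = ptraceL ρ := by
    rw [← hM]
    ext i j
    simp [N, ptraceL, mul_apply, Fintype.sum_prod_type]
  let G := Nᴴ * N
  have hG : G.PosSemidef := posSemidef_conjTranspose_mul_self N
  have hGt : G.trace = 1 := by
    simp only [G]
    rw [trace_mul_comm, hN, ptraceL_trace, ht]
  have hGp : ptraceL G = Mᴴ * M := by
    ext i j
    simp [G, N, ptraceL, mul_apply, Fintype.sum_prod_type]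
  have := S_le_ptrace hG hGt
  rw [hGp, ← S_mul_comm M, hM] at this
  rwa [← hN, S_mul_comm]

end
set_option linter.unusedSectionVars false

section
variable {A B E F : Type*} [Fintype A] [Fintype B] [Fintype E] [Fintype F]

lemma margBE_eq (R : Matrix (A × B × E) (A × B × E) ℂ) : margBE R = ptraceL R := rfl

lemma margE_eq (R : Matrix (A × B × E) (A × B × E) ℂ) : margE R = ptraceL (margAE R) := rfl

/-- Swapping the first two factors. -/
def sw : B × A × E → A × B × E := fun p => (p.2.1, p.1, p.2.2)

lemma margAE_eq (R : Matrix (A × B × E) (A × B × E) ℂ) :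
    margAE R = ptraceL (R.submatrix (sw (B := B) (A := A) (E := E)) sw) := rfl

lemma state_AE {R : Matrix (A × B × E) (A × B × E) ℂ} (h : IsState R) : IsState (margAE R) := by
  rw [margAE_eq]
  refine ⟨ptraceL_psd (h.1.submatrix _), ?_⟩
  rw [ptraceL_trace, ← h.2]
  simp only [Matrix.trace, diag_apply, submatrix_apply, sw, Fintype.sum_prod_type]
  exact Finset.sum_comm

lemma state_BE {R : Matrix (A × B × E) (A × B × E) ℂ} (h : IsState R) : IsState (margBE R) := by
  rw [margBE_eq]
  exact ⟨ptraceL_psd h.1, by rw [ptraceL_trace, h.2]⟩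

lemma state_E {R : Matrix (A × B × E) (A × B × E) ℂ} (h : IsState R) : IsState (margE R) := by
  rw [margE_eq]
  exact ⟨ptraceL_psd (state_AE h).1, by rw [ptraceL_trace, (state_AE h).2]⟩

lemma cmi_lower [Nonempty A] {R : Matrix (A × B × E) (A × B × E) ℂ} (h : IsState R) :
    -(2 * Real.logb 2 (Fintype.card A)) ≤ condMutualInfo R := by
  have h1 := S_le_ptrace h.1 h.2
  have h2 := ptrace_le_S (state_AE h).1 (state_AE h).2
  rw [← margBE_eq] at h1
  rw [← margE_eq] at h2
  unfold condMutualInfo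
  linarith

lemma Esq_bdd {ρ : Matrix (A × B) (A × B) ℂ} (hρ : IsState ρ) :
    BddBelow { x : ℝ | ∃ (d : ℕ) (ρE : Matrix (A × B × Fin d) (A × B × Fin d) ℂ),
      IsState ρE ∧ margAB ρE = ρ ∧ x = (1 / 2) * condMutualInfo ρE } := by
  have : Nonempty A := by
    by_contra hA
    rw [not_nonempty_iff] at hA
    have := hρ.2
    simp [Matrix.trace] at this
  refine ⟨-(Real.logb 2 (Fintype.card A)), ?_⟩
  rintro x ⟨d, R, h1, -, rfl⟩
  have := cmi_lower h1
  linarith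

lemma Esq_nonempty {ρ : Matrix (A × B) (A × B) ℂ} (hρ : IsState ρ) :
    { x : ℝ | ∃ (d : ℕ) (ρE : Matrix (A × B × Fin d) (A × B × Fin d) ℂ),
      IsState ρE ∧ margAB ρE = ρ ∧ x = (1 / 2) * condMutualInfo ρE }.Nonempty := by
  refine ⟨_, 1, ρ.submatrix (fun p => (p.1, p.2.1)) (fun p => (p.1, p.2.1)),
    ⟨hρ.1.submatrix _, ?_⟩, ?_, rfl⟩
  · rw [← hρ.2]
    simp [Matrix.trace, Fintype.sum_prod_type]
  · ext i j; simp [margAB]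

/-- Distribution of products over the sum of extension systems. -/
def kk : A × B × (E ⊕ F) ≃ (A × B × E) ⊕ (A × B × F) :=
  (Equiv.prodCongr (Equiv.refl A) (Equiv.prodSumDistrib B E F)).trans
    (Equiv.prodSumDistrib A (B × E) (B × F))

/-- Direct sum of extensions. -/
def dsum (R : Matrix (A × B × E) (A × B × E) ℂ) (T : Matrix (A × B × F) (A × B × F) ℂ) :
    Matrix (A × B × (E ⊕ F)) (A × B × (E ⊕ F)) ℂ :=
  (fromBlocks R 0 0 T).submatrix kk kk

variable (R : Matrix (A × B × E) (A × B × E) ℂ) (T : Matrix (A × B × F) (A × B × F) ℂ)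

lemma dsum_AE : margAE (dsum R T) = (fromBlocks (margAE R) 0 0 (margAE T)).submatrix
    (Equiv.prodSumDistrib A E F) (Equiv.prodSumDistrib A E F) := by
  ext ⟨a, e | e⟩ ⟨a', e' | e'⟩ <;> simp [margAE, dsum, kk]

lemma dsum_BE : margBE (dsum R T) = (fromBlocks (margBE R) 0 0 (margBE T)).submatrix
    (Equiv.prodSumDistrib B E F) (Equiv.prodSumDistrib B E F) := by
  ext ⟨a, e | e⟩ ⟨a', e' | e'⟩ <;> simp [margBE, dsum, kk]

lemma dsum_E : margE (dsum R T) = (fromBlocks (margE R) 0 0 (margE T)).submatrix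
    (Equiv.refl _) (Equiv.refl _) := by
  ext (e | e) (e' | e') <;> simp [margE, dsum, kk]

lemma dsum_AB : margAB (dsum R T) = margAB R + margAB T := by
  ext ⟨a, b⟩ ⟨a', b'⟩; simp [margAB, dsum, kk]

lemma smul_AE (c : ℂ) : margAE (c • R) = c • margAE R := by
  ext; simp [margAE, Finset.mul_sum]

lemma smul_BE (c : ℂ) : margBE (c • R) = c • margBE R := by
  ext; simp [margBE, Finset.mul_sum]

lemma smul_E (c : ℂ) : margE (c • R) = c • margE R := by
  ext; simp [margE, Finset.mul_sum]

lemma smul_AB (c : ℂ) : margAB (c • R) = c • margAB R := by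
  ext; simp [margAB, Finset.mul_sum]

lemma herm_smul {n : Type*} [Fintype n] {M : Matrix n n ℂ} (h : IsState M) (c : ℝ) :
    ((c : ℂ) • M).IsHermitian := by
  ext i j
  have := h.1.isHermitian.apply i j
  simp [← this]

lemma S_mix {n m k : Type*} [Fintype n] [Fintype m] [Fintype k] {M : Matrix n n ℂ}
    {N : Matrix m m ℂ} (hM : IsState M) (hN : IsState N) (c c' : ℝ) (e : k ≃ n ⊕ m) :
    vonNeumannEntropy ((fromBlocks ((c : ℂ) • M) 0 0 ((c' : ℂ) • N)).submatrix e e)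
      = c * vonNeumannEntropy M + c' * vonNeumannEntropy N + (ff c + ff c') := by
  rw [S_blocks (herm_smul hM c) (herm_smul hN c'), S_smul hM.1.isHermitian hM.2,
    S_smul hN.1.isHermitian hN.2]
  ring

variable {R T}

lemma cmi_mix (hR : IsState R) (hT : IsState T) (c c' : ℝ) :
    condMutualInfo (dsum ((c : ℂ) • R) ((c' : ℂ) • T))
      = c * condMutualInfo R + c' * condMutualInfo T := by
  unfold condMutualInfo
  rw [dsum_AE, dsum_BE, dsum_E]
  simp only [smul_AE, smul_BE, smul_E]
  rw [S_mix (state_AE hR) (state_AE hT), S_mix (state_BE hR) (state_BE hT),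
    S_mix (state_E hR) (state_E hT)]
  unfold dsum
  rw [S_mix hR hT]
  ring

lemma psd_sqrt {n : Type*} [Fintype n] {ρ : Matrix n n ℂ} (h : ρ.PosSemidef) :
    ∃ M : Matrix n n ℂ, M * Mᴴ = ρ := by
  obtain ⟨U, d, h1, h2, h3, h4⟩ := spectral h.isHermitian
  have h4 := h4 h
  refine ⟨U * diagonal (fun i => ((Real.sqrt (d i) : ℝ) : ℂ)), ?_⟩
  rw [h3]
  simp only [conjTranspose_mul, diagonal_conjTranspose]
  rw [← mul_assoc, mul_assoc U, diagonal_mul_diagonal]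
  congr! 4 with i
  simp only [Pi.star_apply, RCLike.star_def, Complex.conj_ofReal]
  rw [← Complex.ofReal_mul, Real.mul_self_sqrt (h4 i)]

lemma dsum_state (hR : IsState R) (hT : IsState T) (l : ℝ) (hl0 : 0 ≤ l) (hl1 : l ≤ 1) :
    IsState (dsum ((l : ℂ) • R) (((1 - l : ℝ) : ℂ) • T)) := by
  constructor
  · apply PosSemidef.submatrix
    obtain ⟨U, hU⟩ := psd_sqrt (hR.1.smul (a := (l : ℂ)) (by exact_mod_cast hl0))
    obtain ⟨V, hV⟩ := psd_sqrt (hT.1.smul (a := ((1 - l : ℝ) : ℂ))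
      (by exact_mod_cast sub_nonneg.2 hl1))
    rw [← hU, ← hV]
    have : fromBlocks (U * Uᴴ) 0 0 (V * Vᴴ)
        = fromBlocks U 0 0 V * (fromBlocks U 0 0 V)ᴴ := by
      simp [fromBlocks_conjTranspose, fromBlocks_multiply]
    rw [this]
    exact posSemidef_self_mul_conjTranspose _
  · have hr := hR.2
    have ht := hT.2
    simp only [dsum, Matrix.trace, diag_apply, submatrix_apply] at hr ht ⊢
    rw [Equiv.sum_comp kk (fun i => fromBlocks ((l : ℂ) • R) 0 0 (((1 - l : ℝ) : ℂ) • T) i i)]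
    simp only [Fintype.sum_sum_type, fromBlocks_apply₁₁, fromBlocks_apply₂₂, Matrix.smul_apply,
      smul_eq_mul, ← Finset.mul_sum, hr, ht]
    simp

/-- Renaming of the extension system. -/
def gg (A B : Type*) (e : F ≃ E) : A × B × F ≃ A × B × E :=
  Equiv.prodCongr (Equiv.refl A) (Equiv.prodCongr (Equiv.refl B) e)

lemma cmi_rename (hR : IsState R) (e : F ≃ E) :
    condMutualInfo (R.submatrix (gg A B e) (gg A B e)) = condMutualInfo R := by
  have h1 : margAE (R.submatrix (gg A B e) (gg A B e)) = (margAE R).submatrix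
    (Equiv.prodCongr (Equiv.refl A) e) (Equiv.prodCongr (Equiv.refl A) e) := rfl
  have h2 : margBE (R.submatrix (gg A B e) (gg A B e)) = (margBE R).submatrix
    (Equiv.prodCongr (Equiv.refl B) e) (Equiv.prodCongr (Equiv.refl B) e) := rfl
  have h3 : margE (R.submatrix (gg A B e) (gg A B e)) = (margE R).submatrix e e := rfl
  unfold condMutualInfo
  rw [h1, h2, h3, S_submatrix (state_AE hR).1.isHermitian, S_submatrix (state_BE hR).1.isHermitian,
    S_submatrix (state_E hR).1.isHermitian, S_submatrix hR.1.isHermitian]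

lemma state_rename (hR : IsState R) (e : F ≃ E) :
    IsState (R.submatrix (gg A B e) (gg A B e)) := by
  refine ⟨hR.1.submatrix _, ?_⟩
  rw [← hR.2]
  simp only [Matrix.trace, diag_apply, submatrix_apply]
  exact Equiv.sum_comp (gg A B e) (fun i => R i i)

lemma AB_rename (e : F ≃ E) :
    margAB (R.submatrix (gg A B e) (gg A B e)) = margAB R := by
  ext i j
  exact Equiv.sum_comp e (fun z => R (i.1, i.2, z) (j.1, j.2, z))

end

end SqConv

/-- Squashed entanglement is convex. -/
theorem squashedEntanglement_convex
    {A B : Type*} [Fintype A] [Fintype B]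
    (ρ σ : Matrix (A × B) (A × B) ℂ) (hρ : IsState ρ) (hσ : IsState σ)
    (l : ℝ) (hl0 : 0 ≤ l) (hl1 : l ≤ 1) :
    Esq ((l : ℂ) • ρ + ((1 - l : ℝ) : ℂ) • σ) ≤ l * Esq ρ + (1 - l) * Esq σ := by
  have hmix : IsState ((l : ℂ) • ρ + ((1 - l : ℝ) : ℂ) • σ) := by
    refine ⟨(hρ.1.smul (by exact_mod_cast hl0)).add
      (hσ.1.smul (by exact_mod_cast sub_nonneg.2 hl1)), ?_⟩
    rw [trace_add, trace_smul, trace_smul, hρ.2, hσ.2]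
    simp
  refine le_of_forall_pos_le_add fun ε hε => ?_
  obtain ⟨x, ⟨d, R, hR, hRρ, hx⟩, hxε⟩ := Real.lt_sInf_add_pos (SqConv.Esq_nonempty hρ) hε
  obtain ⟨y, ⟨d', T, hT, hTσ, hy⟩, hyε⟩ := Real.lt_sInf_add_pos (SqConv.Esq_nonempty hσ) hε
  change x < Esq ρ + ε at hxε
  change y < Esq σ + ε at hyε
  have hD := SqConv.dsum_state hR hT l hl0 hl1
  have key : Esq ((l : ℂ) • ρ + ((1 - l : ℝ) : ℂ) • σ) ≤ l * x + (1 - l) * y := by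
    refine csInf_le (SqConv.Esq_bdd hmix) ?_
    refine ⟨d + d', _, SqConv.state_rename hD finSumFinEquiv.symm, ?_, ?_⟩
    · rw [SqConv.AB_rename, SqConv.dsum_AB, SqConv.smul_AB, SqConv.smul_AB, hRρ, hTσ]
    · rw [SqConv.cmi_rename hD, SqConv.cmi_mix hR hT, hx, hy]
      ring
  have h1 := mul_le_mul_of_nonneg_left hxε.le hl0
  have h2 := mul_le_mul_of_nonneg_left hyε.le (sub_nonneg.2 hl1)
  linarith

end
end

section
/- Squashed entanglement is additive on tensor products: for any states ρ^{AB} on H_A ⊗ H_B and ρ^{A'B'} on H_{A'} ⊗ H_{B'}, one has E_sq(ρ^{AB} ⊗ ρ^{A'B'}) = E_sq(ρ^{AB}) + E_sq(ρ^{A'B'}), where the tensor product state is regarded as a bipartite state with respect to the cut AA' versus BB'. -/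
open Matrix BigOperators Kronecker
open scoped Classical ComplexOrder

noncomputable section

variable {A B E : Type*} [Fintype A] [Fintype B] [Fintype E]

/-! ### Scalar lemma -/

lemma aux_scalar {ι κ : Type*} [Fintype ι] [Fintype κ]
    (w p q : ι → ℝ) (w' p' q' : κ → ℝ)
    (hp : ∀ i, 0 < p i) (hq : ∀ i, 0 < q i) (hp' : ∀ i, 0 < p' i) (hq' : ∀ i, 0 < q' i)
    (hsum : ∑ i, w i * p i = ∑ i, w' i * p' i)
    (h : ∀ t : ℝ, 0 ≤ t → ∑ i, w' i * (p' i ^ 2 / (q' i + t * p' i))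
      ≤ ∑ i, w i * (p i ^ 2 / (q i + t * p i))) :
    ∑ i, w' i * p' i * (Real.log (p' i) - Real.log (q' i))
      ≤ ∑ i, w i * p i * (Real.log (p i) - Real.log (q i)) := by
  set G : ℝ → ℝ := fun t => ∑ i, w i * p i * Real.log (q i + t * p i)
    - ∑ i, w' i * p' i * Real.log (q' i + t * p' i) with hG
  have hderiv : ∀ t : ℝ, 0 ≤ t → HasDerivAt G (∑ i, w i * (p i ^ 2 / (q i + t * p i))
      - ∑ i, w' i * (p' i ^ 2 / (q' i + t * p' i))) t := by
    intro t ht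
    apply HasDerivAt.sub
    · apply HasDerivAt.fun_sum
      intro i _
      have h0 : q i + t * p i ≠ 0 := by have := hp i; have := hq i; positivity
      have h1 : HasDerivAt (fun t : ℝ => q i + t * p i) (p i) t := by
        simpa using ((hasDerivAt_id t).mul_const (p i)).const_add (q i)
      refine ((h1.log h0).const_mul (w i * p i)).congr_deriv ?_
      ring
    · apply HasDerivAt.fun_sum
      intro i _
      have h0 : q' i + t * p' i ≠ 0 := by have := hp' i; have := hq' i; positivity
      have h1 : HasDerivAt (fun t : ℝ => q' i + t * p' i) (p' i) t := by
        simpa using ((hasDerivAt_id t).mul_const (p' i)).const_add (q' i)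
      refine ((h1.log h0).const_mul (w' i * p' i)).congr_deriv ?_
      ring
  have hmono : MonotoneOn G (Set.Ici 0) := by
    apply monotoneOn_of_deriv_nonneg (convex_Ici 0)
    · intro t ht
      exact (hderiv t ht).continuousAt.continuousWithinAt
    · intro t ht
      rw [interior_Ici] at ht
      exact (hderiv t (le_of_lt ht)).differentiableAt.differentiableWithinAt
    · intro t ht
      rw [interior_Ici] at ht
      rw [(hderiv t (le_of_lt ht)).deriv]
      linarith [h t (le_of_lt ht)]
  have hlim : ∀ {α : Type _} [Fintype α] (a b c : α → ℝ), (∀ i, 0 < b i) →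
      Filter.Tendsto (fun t : ℝ => ∑ i, a i * b i * Real.log (c i / t + b i)) Filter.atTop
        (nhds (∑ i, a i * b i * Real.log (b i))) := by
    intro α _ a b c hb
    apply tendsto_finsetSum
    intro i _
    apply Filter.Tendsto.const_mul
    have h1 : Filter.Tendsto (fun t : ℝ => c i / t + b i) Filter.atTop (nhds (b i)) := by
      simpa using (tendsto_const_nhds (x := c i)).div_atTop Filter.tendsto_id |>.add_const (b i)
    exact h1.log (hb i).ne'
  have hlim' : ∀ {α : Type _} [Fintype α] (a b c : α → ℝ), (∀ i, 0 < b i) →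
      Filter.Tendsto (fun t : ℝ => ∑ i, a i * b i * Real.log (c i / t + b i)) Filter.atTop
        (nhds (∑ i, a i * b i * Real.log (b i))) := by
    intro α _ a b c hb
    apply tendsto_finsetSum
    intro i _
    apply Filter.Tendsto.const_mul
    have h1 : Filter.Tendsto (fun t : ℝ => c i / t + b i) Filter.atTop (nhds (b i)) := by
      simpa using (tendsto_const_nhds (x := c i)).div_atTop Filter.tendsto_id |>.add_const (b i)
    exact h1.log (hb i).ne'
  have hT := (hlim w p q hp).sub (hlim' w' p' q' hp')
  have hge : G 0 ≤ ∑ i, w i * p i * Real.log (p i) - ∑ i, w' i * p' i * Real.log (p' i) := by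
    apply ge_of_tendsto hT
    filter_upwards [Filter.eventually_gt_atTop 0] with t ht
    have h1 : G 0 ≤ G t := hmono (by simp) (by simpa using ht.le) ht.le
    have h2 : ∀ x y : ℝ, 0 < x → 0 < y →
        Real.log (y + t * x) = Real.log t + Real.log (y / t + x) := by
      intro x y hx hy
      rw [← Real.log_mul ht.ne' (by positivity)]
      congr 1
      field_simp
    have h3 : G t = ∑ i, w i * p i * Real.log (q i / t + p i)
        - ∑ i, w' i * p' i * Real.log (q' i / t + p' i) := by
      simp only [hG]
      simp_rw [fun i => h2 (p i) (q i) (hp i) (hq i),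
        fun i => h2 (p' i) (q' i) (hp' i) (hq' i), mul_add, Finset.sum_add_distrib,
        ← Finset.sum_mul, hsum]
      ring
    rw [← h3]
    exact h1
  simp only [hG, zero_mul, add_zero] at hge
  simp only [mul_sub, Finset.sum_sub_distrib]
  linarith

/-! ### Diagonalizations with rectangular unitaries -/

/-- `ρ = U diag(p) Uᴴ` with `U` unitary (rectangular index types allowed). -/
structure Diag {n ι : Type*} [Fintype n] [Fintype ι] [DecidableEq n] [DecidableEq ι]
    (ρ : Matrix n n ℂ) (U : Matrix n ι ℂ) (p : ι → ℝ) : Prop where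
  left : U * Uᴴ = 1
  right : Uᴴ * U = 1
  eq : ρ = U * Matrix.diagonal (fun i => (p i : ℂ)) * Uᴴ

lemma Diag.sum_sq_left {n ι : Type*} [Fintype n] [Fintype ι] [DecidableEq n] [DecidableEq ι]
    {M : Matrix n ι ℂ} (h : M * Mᴴ = 1) (j : n) : ∑ i, ‖M j i‖ ^ 2 = 1 := by
  have := congrFun (congrFun h j) j
  simp only [Matrix.mul_apply, Matrix.conjTranspose_apply, Matrix.one_apply_eq] at this
  have h2 : ((∑ i, ‖M j i‖ ^ 2 : ℝ) : ℂ) = 1 := by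
    rw [← this]
    push_cast
    refine Finset.sum_congr rfl fun i _ => ?_
    exact (Complex.mul_conj' _).symm
  exact_mod_cast h2

lemma Diag.sum_sq_right {n ι : Type*} [Fintype n] [Fintype ι] [DecidableEq n] [DecidableEq ι]
    {M : Matrix n ι ℂ} (h : Mᴴ * M = 1) (i : ι) : ∑ j, ‖M j i‖ ^ 2 = 1 := by
  have := Diag.sum_sq_left (M := Mᴴ) (by simpa using h) i
  simpa using this

section
variable {n ι κ : Type*} [Fintype n] [Fintype ι] [Fintype κ] [DecidableEq n] [DecidableEq ι]
  [DecidableEq κ]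

lemma Diag.overlap_left {ρ σ : Matrix n n ℂ} {U : Matrix n ι ℂ} {p : ι → ℝ} {V : Matrix n κ ℂ}
    {q : κ → ℝ} (h : Diag ρ U p) (h' : Diag σ V q) : (Vᴴ * U) * (Vᴴ * U)ᴴ = 1 := by
  rw [Matrix.conjTranspose_mul, Matrix.conjTranspose_conjTranspose, Matrix.mul_assoc,
    ← Matrix.mul_assoc U, h.left, Matrix.one_mul, h'.right]

lemma Diag.overlap_right {ρ σ : Matrix n n ℂ} {U : Matrix n ι ℂ} {p : ι → ℝ} {V : Matrix n κ ℂ}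
    {q : κ → ℝ} (h : Diag ρ U p) (h' : Diag σ V q) : (Vᴴ * U)ᴴ * (Vᴴ * U) = 1 := by
  rw [Matrix.conjTranspose_mul, Matrix.conjTranspose_conjTranspose, Matrix.mul_assoc,
    ← Matrix.mul_assoc V, h'.left, Matrix.one_mul, h.right]

lemma Diag.sum_eq {ρ : Matrix n n ℂ} {U : Matrix n ι ℂ} {p : ι → ℝ} {V : Matrix n κ ℂ}
    {q : κ → ℝ} (h : Diag ρ U p) (h' : Diag ρ V q) (f : ℝ → ℝ) :
    ∑ i, f (p i) = ∑ j, f (q j) := by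
  set M := Vᴴ * U with hM
  have hint : M * Matrix.diagonal (fun i => (p i : ℂ)) =
      Matrix.diagonal (fun i => (q i : ℂ)) * M := by
    have h1 : Vᴴ * ρ * U = M * Matrix.diagonal (fun i => (p i : ℂ)) := by
      rw [h.eq, Matrix.mul_assoc, Matrix.mul_assoc (U * _), h.right, Matrix.mul_one, hM,
        Matrix.mul_assoc]
    have h2 : Vᴴ * ρ * U = Matrix.diagonal (fun i => (q i : ℂ)) * M := by
      rw [h'.eq, ← Matrix.mul_assoc, ← Matrix.mul_assoc, h'.right, Matrix.one_mul, hM,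
        Matrix.mul_assoc]
    rw [← h1, h2]
  have key : ∀ j i, ‖M j i‖ ^ 2 * f (p i) = ‖M j i‖ ^ 2 * f (q j) := by
    intro j i
    by_cases h0 : M j i = 0
    · simp [h0]
    have := congrFun (congrFun hint j) i
    rw [Matrix.mul_diagonal, Matrix.diagonal_mul, mul_comm] at this
    have := mul_right_cancel₀ h0 this
    rw [Complex.ofReal_inj.mp this]
  calc ∑ i, f (p i) = ∑ i, ∑ j, ‖M j i‖ ^ 2 * f (p i) := by
        refine Finset.sum_congr rfl fun i _ => ?_
        rw [← Finset.sum_mul, Diag.sum_sq_right (h.overlap_right h'), one_mul]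
    _ = ∑ j, ∑ i, ‖M j i‖ ^ 2 * f (q j) := by
        rw [Finset.sum_comm]
        simp_rw [key]
    _ = ∑ j, f (q j) := by
        refine Finset.sum_congr rfl fun i _ => ?_
        rw [← Finset.sum_mul, Diag.sum_sq_left (h.overlap_left h'), one_mul]

lemma Diag.of_isHermitian {ρ : Matrix n n ℂ} (h : ρ.IsHermitian) :
    Diag ρ (h.eigenvectorUnitary : Matrix n n ℂ) h.eigenvalues := by
  refine ⟨?_, ?_, ?_⟩
  · exact Unitary.mul_star_self_of_mem h.eigenvectorUnitary.2
  · exact Unitary.star_mul_self_of_mem h.eigenvectorUnitary.2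
  · exact h.spectral_theorem

lemma Diag.isHermitian {ρ : Matrix n n ℂ} {U : Matrix n ι ℂ} {p : ι → ℝ} (h : Diag ρ U p) :
    ρ.IsHermitian := by
  rw [h.eq, Matrix.IsHermitian]
  simp only [Matrix.conjTranspose_mul, Matrix.conjTranspose_conjTranspose, Matrix.mul_assoc,
    Matrix.diagonal_conjTranspose]
  congr 3
  ext i
  simp

lemma Diag.entropy {ρ : Matrix n n ℂ} {U : Matrix n ι ℂ} {p : ι → ℝ} (h : Diag ρ U p) :
    vonNeumannEntropy ρ = (∑ i, Real.negMulLog (p i)) / Real.log 2 := by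
  rw [vonNeumannEntropy, dif_pos h.isHermitian]
  have h' : ∀ i, -(h.isHermitian.eigenvalues i * Real.logb 2 (h.isHermitian.eigenvalues i))
    = Real.negMulLog (h.isHermitian.eigenvalues i) / Real.log 2 := by
    intro i
    rw [Real.negMulLog, Real.logb]
    ring
  rw [h.sum_eq (Diag.of_isHermitian h.isHermitian), Finset.sum_div]
  convert Finset.sum_congr rfl fun i _ => h' i

lemma Diag.exists_of_posDef {ρ : Matrix n n ℂ} (h : ρ.PosDef) :
    ∃ (U : Matrix n n ℂ) (p : n → ℝ), Diag ρ U p ∧ ∀ i, 0 < p i :=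
  ⟨_, _, Diag.of_isHermitian h.1, fun i => h.eigenvalues_pos i⟩

lemma Diag.exists_of_posSemidef {ρ : Matrix n n ℂ} (h : ρ.PosSemidef) :
    ∃ (U : Matrix n n ℂ) (p : n → ℝ), Diag ρ U p ∧ ∀ i, 0 ≤ p i :=
  ⟨_, _, Diag.of_isHermitian h.1, fun i => h.eigenvalues_nonneg i⟩

/-- The variational functional. -/
def Jf (t : ℝ) (X ρ σ : Matrix n n ℂ) : ℝ :=
  2 * (Xᴴ * ρ).trace.re - (X * Xᴴ * σ).trace.re - t * (Xᴴ * X * ρ).trace.re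

lemma trace_aux (M N : Matrix κ ι ℂ) : (Nᴴ * M).trace = ∑ j, ∑ i, star (N j i) * M j i := by
  rw [Matrix.trace, Finset.sum_comm]
  simp [Matrix.mul_apply]

lemma Jf_eq {ρ σ : Matrix n n ℂ} {U : Matrix n ι ℂ} {p : ι → ℝ} {V : Matrix n κ ℂ}
    {q : κ → ℝ} (h : Diag ρ U p) (h' : Diag σ V q) (t : ℝ) (Y : Matrix κ ι ℂ) :
    Jf t (V * Y * Uᴴ) ρ σ = ∑ j, ∑ i, (2 * (star (Y j i) * (Vᴴ * U) j i).re * p i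
      - q j * ‖Y j i‖ ^ 2 - t * (p i * ‖Y j i‖ ^ 2)) := by
  have e1 : ((V * Y * Uᴴ)ᴴ * ρ).trace =
      (Yᴴ * ((Vᴴ * U) * Matrix.diagonal (fun i => (p i : ℂ)))).trace := by
    calc _ = (U * (Yᴴ * ((Vᴴ * U) * Matrix.diagonal (fun i => (p i : ℂ))) * Uᴴ)).trace := by
          rw [h.eq]; simp only [Matrix.conjTranspose_mul, Matrix.conjTranspose_conjTranspose,
            Matrix.mul_assoc]
      _ = _ := by
          rw [Matrix.trace_mul_comm, Matrix.mul_assoc, h.right, Matrix.mul_one]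
  have e2 : ((V * Y * Uᴴ) * (V * Y * Uᴴ)ᴴ * σ).trace =
      (Yᴴ * (Matrix.diagonal (fun i => (q i : ℂ)) * Y)).trace := by
    calc _ = (V * (Y * ((Uᴴ * U) * (Yᴴ * ((Vᴴ * V) *
            Matrix.diagonal (fun i => (q i : ℂ))))) * Vᴴ)).trace := by
          rw [h'.eq]; simp only [Matrix.conjTranspose_mul, Matrix.conjTranspose_conjTranspose,
            Matrix.mul_assoc]
      _ = _ := by
          rw [Matrix.trace_mul_comm, Matrix.mul_assoc, h'.right, h.right, Matrix.mul_one,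
            Matrix.one_mul, Matrix.one_mul, Matrix.trace_mul_comm, Matrix.mul_assoc]
  have e3 : ((V * Y * Uᴴ)ᴴ * (V * Y * Uᴴ) * ρ).trace =
      (Yᴴ * (Y * Matrix.diagonal (fun i => (p i : ℂ)))).trace := by
    calc _ = (U * (Yᴴ * ((Vᴴ * V) * (Y * ((Uᴴ * U) *
            Matrix.diagonal (fun i => (p i : ℂ))))) * Uᴴ)).trace := by
          rw [h.eq]; simp only [Matrix.conjTranspose_mul, Matrix.conjTranspose_conjTranspose,
            Matrix.mul_assoc]
      _ = _ := by
          rw [Matrix.trace_mul_comm, Matrix.mul_assoc, h'.right, h.right, Matrix.mul_one,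
            Matrix.one_mul, Matrix.one_mul]
  rw [Jf, e1, e2, e3, trace_aux, trace_aux, trace_aux]
  simp only [Complex.re_sum, Finset.mul_sum, ← Finset.sum_sub_distrib]
  refine Finset.sum_congr rfl fun j _ => Finset.sum_congr rfl fun i _ => ?_
  rw [Matrix.mul_diagonal, Matrix.diagonal_mul, Matrix.mul_diagonal]
  have f1 : (star (Y j i) * ((Vᴴ * U) j i * (p i : ℂ))).re
      = (star (Y j i) * (Vᴴ * U) j i).re * p i := by
    rw [← mul_assoc, Complex.re_mul_ofReal]
  have f2 : (star (Y j i) * ((q j : ℂ) * Y j i)).re = q j * ‖Y j i‖ ^ 2 := by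
    rw [mul_left_comm, Complex.re_ofReal_mul, Complex.star_def, Complex.conj_mul']
    norm_cast
  have f3 : (star (Y j i) * (Y j i * (p i : ℂ))).re = p i * ‖Y j i‖ ^ 2 := by
    rw [← mul_assoc, Complex.re_mul_ofReal, Complex.star_def, Complex.conj_mul', mul_comm]
    norm_cast
  rw [f1, f2, f3]
  ring

lemma Jf_le {ρ σ : Matrix n n ℂ} {U : Matrix n ι ℂ} {p : ι → ℝ} {V : Matrix n κ ℂ}
    {q : κ → ℝ} (h : Diag ρ U p) (h' : Diag σ V q) (hp : ∀ i, 0 < p i) (hq : ∀ i, 0 < q i)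
    (t : ℝ) (ht : 0 ≤ t) (X : Matrix n n ℂ) :
    Jf t X ρ σ ≤ ∑ x : κ × ι, ‖(Vᴴ * U) x.1 x.2‖ ^ 2 * (p x.2 ^ 2 / (q x.1 + t * p x.2)) := by
  have hX : X = V * (Vᴴ * X * U) * Uᴴ := by
    calc X = (V * Vᴴ) * X * (U * Uᴴ) := by rw [h.left, h'.left]; simp
      _ = _ := by simp only [Matrix.mul_assoc]
  rw [hX, Jf_eq h h', Fintype.sum_prod_type]
  refine Finset.sum_le_sum fun j _ => Finset.sum_le_sum fun i _ => ?_
  set y := (Vᴴ * X * U) j i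
  set m := (Vᴴ * U) j i
  have hc : 0 < q j + t * p i := by have := hp i; have := hq j; positivity
  have h1 : (star y * m).re ≤ ‖y‖ * ‖m‖ := by
    refine (Complex.re_le_norm _).trans ?_
    simp
  have h2 : 2 * (star y * m).re * p i ≤ 2 * (‖y‖ * ‖m‖) * p i := by
    have := hp i
    gcongr
  have h3 : 2 * (‖y‖ * ‖m‖) * p i - (q j + t * p i) * ‖y‖ ^ 2
      ≤ ‖m‖ ^ 2 * (p i ^ 2 / (q j + t * p i)) := by
    rw [← mul_div_assoc, le_div_iff₀ hc]
    nlinarith [sq_nonneg (‖m‖ * p i - (q j + t * p i) * ‖y‖)]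
  linarith

lemma Jf_exists {ρ σ : Matrix n n ℂ} {U : Matrix n ι ℂ} {p : ι → ℝ} {V : Matrix n κ ℂ}
    {q : κ → ℝ} (h : Diag ρ U p) (h' : Diag σ V q) (hp : ∀ i, 0 < p i) (hq : ∀ i, 0 < q i)
    (t : ℝ) (ht : 0 ≤ t) : ∃ X : Matrix n n ℂ,
    Jf t X ρ σ = ∑ x : κ × ι, ‖(Vᴴ * U) x.1 x.2‖ ^ 2 * (p x.2 ^ 2 / (q x.1 + t * p x.2)) := by
  refine ⟨V * (Matrix.of fun j i => (Vᴴ * U) j i * ((p i / (q j + t * p i) : ℝ) : ℂ)) * Uᴴ, ?_⟩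
  rw [Jf_eq h h', Fintype.sum_prod_type]
  refine Finset.sum_congr rfl fun j _ => Finset.sum_congr rfl fun i _ => ?_
  rw [Matrix.of_apply]
  set m := (Vᴴ * U) j i
  have hc : 0 < q j + t * p i := by have := hp i; have := hq j; positivity
  have hr : (star (m * ((p i / (q j + t * p i) : ℝ) : ℂ)) * m).re
      = ‖m‖ ^ 2 * (p i / (q j + t * p i)) := by
    rw [Complex.star_def, map_mul, Complex.conj_ofReal, mul_right_comm, Complex.conj_mul',
      Complex.re_mul_ofReal]
    norm_cast
  rw [hr, norm_mul, Complex.norm_real, mul_pow, Real.norm_eq_abs, sq_abs]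
  have hq2 : q j = (q j + t * p i) - t * p i := by ring
  generalize q j + t * p i = c at hc hq2 ⊢
  rw [hq2]
  field_simp
  ring

end

section
variable {n m ι κ ι' κ' : Type*} [Fintype n] [Fintype m] [Fintype ι] [Fintype κ]
  [Fintype ι'] [Fintype κ'] [DecidableEq n] [DecidableEq m] [DecidableEq ι]
  [DecidableEq κ] [DecidableEq ι'] [DecidableEq κ']

lemma trace_kron_one_mul (Z : Matrix n n ℂ) (ρ : Matrix (n × m) (n × m) ℂ) :
    ((Z ⊗ₖ (1 : Matrix m m ℂ)) * ρ).trace = (Z * ptraceR ρ).trace := by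
  simp only [Matrix.trace, Matrix.diag, Matrix.mul_apply, Fintype.sum_prod_type, ptraceR,
    Matrix.kroneckerMap_apply, Matrix.one_apply, Finset.mul_sum]
  refine Finset.sum_congr rfl fun i _ => ?_
  rw [Finset.sum_comm]
  refine Finset.sum_congr rfl fun j _ => ?_
  simp

lemma Jf_ptrace (t : ℝ) (X : Matrix n n ℂ) (ρ σ : Matrix (n × m) (n × m) ℂ) :
    Jf t (X ⊗ₖ (1 : Matrix m m ℂ)) ρ σ = Jf t X (ptraceR ρ) (ptraceR σ) := by
  have h1 : (X ⊗ₖ (1 : Matrix m m ℂ))ᴴ = Xᴴ ⊗ₖ (1 : Matrix m m ℂ) := by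
    rw [Matrix.conjTranspose_kronecker, Matrix.conjTranspose_one]
  simp only [Jf, h1, ← Matrix.mul_kronecker_mul, Matrix.one_mul, trace_kron_one_mul]

/-- Relative entropy in terms of diagonalizations. -/
def relEnt (U : Matrix n ι ℂ) (p : ι → ℝ) (V : Matrix n κ ℂ) (q : κ → ℝ) : ℝ :=
  ∑ x : κ × ι, ‖(Vᴴ * U) x.1 x.2‖ ^ 2 * p x.2 * (Real.log (p x.2) - Real.log (q x.1))

lemma Diag.trace_eq {ρ : Matrix n n ℂ} {U : Matrix n ι ℂ} {p : ι → ℝ} (h : Diag ρ U p) :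
    ρ.trace = ((∑ i, p i : ℝ) : ℂ) := by
  rw [h.eq, Matrix.trace_mul_comm, ← Matrix.mul_assoc, h.right, Matrix.one_mul,
    Matrix.trace_diagonal]
  push_cast
  rfl

lemma ptraceR_trace (ρ : Matrix (n × m) (n × m) ℂ) : (ptraceR ρ).trace = ρ.trace := by
  simp [Matrix.trace, ptraceR, Fintype.sum_prod_type]

lemma sum_overlap {ρ σ : Matrix n n ℂ} {U : Matrix n ι ℂ} {p : ι → ℝ} {V : Matrix n κ ℂ}
    {q : κ → ℝ} (h : Diag ρ U p) (h' : Diag σ V q) (f : ι → ℝ) :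
    ∑ x : κ × ι, ‖(Vᴴ * U) x.1 x.2‖ ^ 2 * f x.2 = ∑ i, f i := by
  rw [Fintype.sum_prod_type_right]
  refine Finset.sum_congr rfl fun i _ => ?_
  simp only
  rw [← Finset.sum_mul, Diag.sum_sq_right (h.overlap_right h'), one_mul]

/-- Monotonicity of relative entropy under partial trace. -/
lemma relEnt_mono {ρ σ : Matrix (n × m) (n × m) ℂ} {U : Matrix (n × m) ι ℂ} {p : ι → ℝ}
    {V : Matrix (n × m) κ ℂ} {q : κ → ℝ} (h : Diag ρ U p) (h' : Diag σ V q)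
    (hp : ∀ i, 0 < p i) (hq : ∀ i, 0 < q i)
    {U' : Matrix n ι' ℂ} {p' : ι' → ℝ}
    {V' : Matrix n κ' ℂ} {q' : κ' → ℝ} (hh : Diag (ptraceR ρ) U' p')
    (hh' : Diag (ptraceR σ) V' q')
    (hp' : ∀ i, 0 < p' i) (hq' : ∀ i, 0 < q' i) :
    relEnt U' p' V' q' ≤ relEnt U p V q := by
  unfold relEnt
  refine aux_scalar (ι := κ × ι) (κ := κ' × ι') (fun x => ‖(Vᴴ * U) x.1 x.2‖ ^ 2) (fun x => p x.2)
    (fun x => q x.1) (fun x => ‖(V'ᴴ * U') x.1 x.2‖ ^ 2) (fun x => p' x.2)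
    (fun x => q' x.1) (fun _ => hp _) (fun _ => hq _) (fun _ => hp' _) (fun _ => hq' _) ?_ ?_
  · rw [sum_overlap h h' p, sum_overlap hh hh' p']
    have := h.trace_eq
    rw [← ptraceR_trace, hh.trace_eq] at this
    exact_mod_cast this.symm
  · intro t ht
    obtain ⟨X, hX⟩ := Jf_exists hh hh' hp' hq' t ht
    rw [← hX, ← Jf_ptrace]
    exact Jf_le h h' hp hq t ht _

lemma sum_overlap' {ρ σ : Matrix n n ℂ} {U : Matrix n ι ℂ} {p : ι → ℝ} {V : Matrix n κ ℂ}
    {q : κ → ℝ} (h : Diag ρ U p) (_h' : Diag σ V q) (f : κ → ℝ) :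
    ∑ x : κ × ι, ‖(Vᴴ * U) x.1 x.2‖ ^ 2 * p x.2 * f x.1
      = ∑ j, ((Vᴴ * ρ * V) j j).re * f j := by
  rw [Fintype.sum_prod_type]
  refine Finset.sum_congr rfl fun j _ => ?_
  simp only
  rw [← Finset.sum_mul]
  congr 1
  have : Vᴴ * ρ * V = (Vᴴ * U) * Matrix.diagonal (fun i => (p i : ℂ)) * (Vᴴ * U)ᴴ := by
    rw [h.eq]
    simp only [Matrix.conjTranspose_mul, Matrix.conjTranspose_conjTranspose, Matrix.mul_assoc]
  rw [this, Matrix.mul_apply, Complex.re_sum]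
  refine Finset.sum_congr rfl fun i _ => ?_
  rw [Matrix.mul_diagonal, Matrix.conjTranspose_apply, mul_right_comm, Complex.re_mul_ofReal,
    Complex.star_def, Complex.mul_conj']
  norm_cast

lemma relEnt_eq {ρ σ : Matrix n n ℂ} {U : Matrix n ι ℂ} {p : ι → ℝ} {V : Matrix n κ ℂ}
    {q : κ → ℝ} (h : Diag ρ U p) (h' : Diag σ V q) :
    relEnt U p V q = -(∑ i, Real.negMulLog (p i))
      - ∑ j, ((Vᴴ * ρ * V) j j).re * Real.log (q j) := by
  unfold relEnt
  simp only [mul_sub, Finset.sum_sub_distrib]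
  rw [sum_overlap' h h' (fun j => Real.log (q j))]
  congr 1
  have := sum_overlap h h' (fun i => p i * Real.log (p i))
  simp only [← mul_assoc] at this
  rw [this, ← Finset.sum_neg_distrib]
  refine Finset.sum_congr rfl fun i _ => ?_
  rw [Real.negMulLog]; ring

lemma Diag.one_kron {τ : Matrix n n ℂ} {W : Matrix n ι ℂ} {q : ι → ℝ} (h : Diag τ W q) :
    Diag ((1 : Matrix m m ℂ) ⊗ₖ τ) ((1 : Matrix m m ℂ) ⊗ₖ W) (fun x => q x.2) := by
  refine ⟨?_, ?_, ?_⟩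
  · rw [Matrix.conjTranspose_kronecker, ← Matrix.mul_kronecker_mul, h.left]; simp
  · rw [Matrix.conjTranspose_kronecker, ← Matrix.mul_kronecker_mul, h.right]; simp
  · have : Matrix.diagonal (fun x : m × ι => (q x.2 : ℂ))
        = (1 : Matrix m m ℂ) ⊗ₖ Matrix.diagonal (fun i => (q i : ℂ)) := by
      rw [← Matrix.diagonal_one, Matrix.diagonal_kronecker_diagonal]; simp
    rw [this, Matrix.conjTranspose_kronecker, ← Matrix.mul_kronecker_mul,
      ← Matrix.mul_kronecker_mul, h.eq]
    simp

lemma Diag.reindex {ρ : Matrix n n ℂ} {U : Matrix n ι ℂ} {p : ι → ℝ} (h : Diag ρ U p)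
    (e : m ≃ n) : Diag (ρ.submatrix e e) (U.submatrix e id) p := by
  refine ⟨?_, ?_, ?_⟩
  · have : (U * Uᴴ).submatrix e e = 1 := by rw [h.left]; simp
    exact this
  · rw [Matrix.conjTranspose_submatrix, Matrix.submatrix_mul_equiv, h.right, Matrix.submatrix_id_id]
  · rw [h.eq]
    rfl

lemma sum_ptraceL {ρ : Matrix (m × n) (m × n) ℂ} {W : Matrix n ι ℂ} {q : ι → ℝ}
    (h : Diag (ptraceL ρ) W q) :
    ∑ j, (((((1 : Matrix m m ℂ) ⊗ₖ W)ᴴ * ρ * ((1 : Matrix m m ℂ) ⊗ₖ W)) j j).re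
      * Real.log (q j.2)) = -(∑ i, Real.negMulLog (q i)) := by
  have h1 : ∀ i, ∑ a, ((((1 : Matrix m m ℂ) ⊗ₖ W)ᴴ * ρ * ((1 : Matrix m m ℂ) ⊗ₖ W)) (a, i) (a, i))
      = (Wᴴ * ptraceL ρ * W) i i := by
    intro i
    simp only [Matrix.mul_apply, Matrix.conjTranspose_apply, Matrix.kroneckerMap_apply,
      Matrix.one_apply, Fintype.sum_prod_type, ptraceL]
    simp [Finset.mul_sum, Finset.sum_mul]
    rw [Finset.sum_comm]
    refine Finset.sum_congr rfl fun k _ => ?_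
    rw [Finset.sum_comm (s := Finset.univ (α := n)) (t := Finset.univ (α := m))]
    refine Finset.sum_congr rfl fun a _ => ?_
    rw [Finset.sum_comm]
    refine Finset.sum_congr rfl fun l _ => ?_
    simp [apply_ite (starRingEnd ℂ)]
  have h2 : Wᴴ * ptraceL ρ * W = Matrix.diagonal (fun i => (q i : ℂ)) := by
    rw [h.eq, ← Matrix.mul_assoc, ← Matrix.mul_assoc, h.right, Matrix.one_mul, Matrix.mul_assoc,
      h.right, Matrix.mul_one]
  rw [Fintype.sum_prod_type_right, ← Finset.sum_neg_distrib]
  refine Finset.sum_congr rfl fun i _ => ?_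
  simp only
  rw [← Finset.sum_mul, ← Complex.re_sum, h1, h2, Real.negMulLog]
  simp

lemma Diag.add_smul {ρ : Matrix n n ℂ} {U : Matrix n ι ℂ} {p : ι → ℝ} (h : Diag ρ U p) (c : ℝ) :
    Diag (ρ + (c : ℂ) • (1 : Matrix n n ℂ)) U (fun i => p i + c) := by
  refine ⟨h.left, h.right, ?_⟩
  have : Matrix.diagonal (fun i => ((p i + c : ℝ) : ℂ))
      = Matrix.diagonal (fun i => (p i : ℂ)) + (c : ℂ) • (1 : Matrix ι ι ℂ) := by
    rw [← Matrix.diagonal_one, ← Matrix.diagonal_smul, Matrix.diagonal_add]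
    congr 1
    ext i
    simp
  rw [this, Matrix.mul_add, Matrix.add_mul, ← h.eq, Matrix.mul_smul, Matrix.smul_mul,
    Matrix.mul_one, h.left]

lemma psd_marg {l : Type*} [Fintype l] {ρ : Matrix n n ℂ} (h : ρ.PosSemidef) (f : l → m → n) :
    (Matrix.of fun x y => ∑ k, ρ (f k x) (f k y)).PosSemidef := by
  have : (Matrix.of fun x y => ∑ k, ρ (f k x) (f k y)) = ∑ k, ρ.submatrix (f k) (f k) := by
    ext x y
    simp [Matrix.sum_apply]
  rw [this]
  exact Matrix.posSemidef_sum _ fun k _ => h.submatrix _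

end

section
variable {A B E : Type*} [Fintype A] [Fintype B] [Fintype E]

lemma psd_margAE {ω : Matrix (A × B × E) (A × B × E) ℂ} (h : ω.PosSemidef) :
    (margAE ω).PosSemidef :=
  psd_marg h (fun (b : B) (x : A × E) => (x.1, b, x.2))

lemma psd_margBE {ω : Matrix (A × B × E) (A × B × E) ℂ} (h : ω.PosSemidef) :
    (margBE ω).PosSemidef :=
  psd_marg h (fun (a : A) (x : B × E) => (a, x.1, x.2))

lemma psd_margE {ω : Matrix (A × B × E) (A × B × E) ℂ} (h : ω.PosSemidef) :
    (margE ω).PosSemidef := by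
  have := psd_marg h (fun (k : A × B) (x : E) => (k.1, k.2, x))
  simp only [Fintype.sum_prod_type] at this
  exact this

/-- The core inequality for a matrix whose marginals are all positive definite. -/
lemma ssa_core [DecidableEq A] [DecidableEq B] [DecidableEq E]
    {ι₁ ι₂ ι₃ ι₄ : Type*} [Fintype ι₁] [Fintype ι₂] [Fintype ι₃] [Fintype ι₄]
    [DecidableEq ι₁] [DecidableEq ι₂] [DecidableEq ι₃] [DecidableEq ι₄]
    {ω : Matrix (A × B × E) (A × B × E) ℂ}
    {U : Matrix (A × B × E) ι₁ ℂ} {p : ι₁ → ℝ} (h : Diag ω U p)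
    {R : Matrix (A × E) ι₂ ℂ} {r : ι₂ → ℝ} (hr : Diag (margAE ω) R r)
    {W : Matrix (B × E) ι₃ ℂ} {q : ι₃ → ℝ} (hq : Diag (margBE ω) W q)
    {S : Matrix E ι₄ ℂ} {s : ι₄ → ℝ} (hs : Diag (margE ω) S s)
    (p0 : ∀ i, 0 < p i) (r0 : ∀ i, 0 < r i) (q0 : ∀ i, 0 < q i) (s0 : ∀ i, 0 < s i) :
    ∑ i, Real.negMulLog (p i) + ∑ i, Real.negMulLog (s i)
      ≤ ∑ i, Real.negMulLog (r i) + ∑ i, Real.negMulLog (q i) := by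
  let f : (A × E) × B ≃ A × B × E :=
    ⟨fun x => (x.1.1, x.2, x.1.2), fun x => ((x.1, x.2.2), x.2.1), fun _ => rfl, fun _ => rfl⟩
  have hq' : Diag (ptraceL ω) W q := hq
  have hs' : Diag (ptraceL (margAE ω)) S s := by
    have : ptraceL (margAE ω) = margE ω := rfl
    rw [this]; exact hs
  have hσ := hq.one_kron (m := A)
  have hσs := hs.one_kron (m := A)
  have hρ1 : Diag (ptraceR (ω.submatrix f f)) R r := hr
  have hσ1 : Diag (ptraceR (((1 : Matrix A A ℂ) ⊗ₖ margBE ω).submatrix f f))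
      ((1 : Matrix A A ℂ) ⊗ₖ S) (fun x : A × ι₄ => s x.2) := by
    convert hσs using 1
    ext x y
    simp only [ptraceR, Matrix.submatrix_apply, Matrix.kroneckerMap_apply, margBE, margE, f,
      Equiv.coe_fn_mk]
    rw [Finset.sum_comm, Finset.mul_sum]
  have := relEnt_mono (h.reindex f) (hσ.reindex f) p0 (fun _ => q0 _) hρ1 hσ1 r0 (fun _ => s0 _)
  rw [relEnt_eq hρ1 hσ1, relEnt_eq (h.reindex f) (hσ.reindex f)] at this
  have e1 := sum_ptraceL hs'
  have e2 := sum_ptraceL hq'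
  have e3 : ((((1 : Matrix A A ℂ) ⊗ₖ W).submatrix f id)ᴴ * ω.submatrix f f
      * ((1 : Matrix A A ℂ) ⊗ₖ W).submatrix f id)
      = (((1 : Matrix A A ℂ) ⊗ₖ W)ᴴ * ω * ((1 : Matrix A A ℂ) ⊗ₖ W)) := by
    rw [Matrix.conjTranspose_submatrix, Matrix.submatrix_mul_equiv, Matrix.submatrix_mul_equiv,
      Matrix.submatrix_id_id]
  have e4 : ptraceR (ω.submatrix f f) = margAE ω := rfl
  rw [e3, e4, e1, e2] at this
  linarith

lemma margAE_add (ω : Matrix (A × B × E) (A × B × E) ℂ) (c : ℝ) :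
    margAE (ω + (c : ℂ) • (1 : Matrix (A × B × E) (A × B × E) ℂ))
      = margAE ω + ((Fintype.card B * c : ℝ) : ℂ) • (1 : Matrix (A × E) (A × E) ℂ) := by
  ext x y
  simp [margAE, Matrix.one_apply, Finset.sum_add_distrib, Prod.ext_iff]

lemma margBE_add (ω : Matrix (A × B × E) (A × B × E) ℂ) (c : ℝ) :
    margBE (ω + (c : ℂ) • (1 : Matrix (A × B × E) (A × B × E) ℂ))
      = margBE ω + ((Fintype.card A * c : ℝ) : ℂ) • (1 : Matrix (B × E) (B × E) ℂ) := by
  ext x y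
  simp [margBE, Matrix.one_apply, Finset.sum_add_distrib, Prod.ext_iff]

lemma margE_add (ω : Matrix (A × B × E) (A × B × E) ℂ) (c : ℝ) :
    margE (ω + (c : ℂ) • (1 : Matrix (A × B × E) (A × B × E) ℂ))
      = margE ω + ((Fintype.card A * Fintype.card B * c : ℝ) : ℂ) • (1 : Matrix E E ℂ) := by
  ext x y
  simp [margE, Matrix.one_apply, Finset.sum_add_distrib, Prod.ext_iff, mul_assoc]

lemma tendsto_entropy {α : Type*} [Fintype α] (a : α → ℝ) (b : ℝ) : Filter.Tendsto
    (fun c : ℝ => ∑ i, Real.negMulLog (a i + b * c)) (nhdsWithin 0 (Set.Ioi 0))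
    (nhds (∑ i, Real.negMulLog (a i))) := by
  have : Continuous (fun c : ℝ => ∑ i, Real.negMulLog (a i + b * c)) := by
    refine continuous_finsetSum _ fun i _ => Real.continuous_negMulLog.comp (by fun_prop)
  have h2 := (this.tendsto 0).mono_left (nhdsWithin_le_nhds (s := Set.Ioi 0))
  simpa using h2

/-- Strong subadditivity. -/
lemma condMutualInfo_nonneg [Nonempty A] [Nonempty B] {ω : Matrix (A × B × E) (A × B × E) ℂ}
    (h : ω.PosSemidef) : 0 ≤ condMutualInfo ω := by
  obtain ⟨U, p, hU, p0⟩ := Diag.exists_of_posSemidef h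
  obtain ⟨R, r, hR, r0⟩ := Diag.exists_of_posSemidef (psd_margAE h)
  obtain ⟨W, q, hW, q0⟩ := Diag.exists_of_posSemidef (psd_margBE h)
  obtain ⟨S, s, hS, s0⟩ := Diag.exists_of_posSemidef (psd_margE h)
  rw [condMutualInfo, hU.entropy, hR.entropy, hW.entropy, hS.entropy]
  have hA : (0 : ℝ) < Fintype.card A := by exact_mod_cast Fintype.card_pos
  have hB : (0 : ℝ) < Fintype.card B := by exact_mod_cast Fintype.card_pos
  have key : ∀ c : ℝ, 0 < c →
      ∑ i, Real.negMulLog (p i + c)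
        + ∑ i, Real.negMulLog (s i + Fintype.card A * Fintype.card B * c)
      ≤ ∑ i, Real.negMulLog (r i + Fintype.card B * c)
        + ∑ i, Real.negMulLog (q i + Fintype.card A * c) := by
    intro c hc
    have hR' := hR.add_smul (Fintype.card B * c)
    have hW' := hW.add_smul (Fintype.card A * c)
    have hS' := hS.add_smul (Fintype.card A * Fintype.card B * c)
    have hU' := hU.add_smul c
    refine ssa_core hU' (R := R) (W := W) (S := S) ?_ ?_ ?_ ?_ ?_ ?_ ?_
    · convert hR' using 1
      convert margAE_add ω c
    · convert hW' using 1
      convert margBE_add ω c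
    · convert hS' using 1
      convert margE_add ω c
    · intro i; have := p0 i; positivity
    · intro i; have := r0 i; positivity
    · intro i; have := q0 i; positivity
    · intro i; have := s0 i; positivity
  have hl := (tendsto_entropy p 1).add (tendsto_entropy s (Fintype.card A * Fintype.card B))
  have hr := (tendsto_entropy r (Fintype.card B)).add (tendsto_entropy q (Fintype.card A))
  have := le_of_tendsto_of_tendsto hl hr (by
    filter_upwards [self_mem_nhdsWithin] with c hc
    simpa using key c hc)
  have h2 : (0 : ℝ) < Real.log 2 := Real.log_pos (by norm_num)
  rw [← add_div, ← sub_div, ← sub_div]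
  apply div_nonneg _ h2.le
  linarith

lemma entropy_submatrix {n m : Type*} [Fintype n] [Fintype m] (ρ : Matrix n n ℂ) (e : m ≃ n) :
    vonNeumannEntropy (ρ.submatrix e e) = vonNeumannEntropy ρ := by
  by_cases h : ρ.IsHermitian
  · have := Diag.of_isHermitian h
    rw [this.entropy, (this.reindex e).entropy]
  · have h' : ¬ (ρ.submatrix e e).IsHermitian := by
      rwa [Matrix.isHermitian_submatrix_equiv]
    rw [vonNeumannEntropy, vonNeumannEntropy, dif_neg h, dif_neg h']

lemma entropy_eq_of_equiv {n m : Type*} [Fintype n] [Fintype m] (ρ : Matrix n n ℂ)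
    (σ : Matrix m m ℂ) (e : m ≃ n) (h : ∀ x y, σ x y = ρ (e x) (e y)) :
    vonNeumannEntropy σ = vonNeumannEntropy ρ := by
  rw [← entropy_submatrix ρ e]
  congr 1
  ext x y
  exact h x y

lemma Diag.kron {n m ι κ : Type*} [Fintype n] [Fintype m] [Fintype ι] [Fintype κ]
    [DecidableEq n] [DecidableEq m] [DecidableEq ι] [DecidableEq κ]
    {ρ : Matrix n n ℂ} {U : Matrix n ι ℂ} {p : ι → ℝ} (h : Diag ρ U p)
    {σ : Matrix m m ℂ} {V : Matrix m κ ℂ} {q : κ → ℝ} (h' : Diag σ V q) :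
    Diag (ρ ⊗ₖ σ) (U ⊗ₖ V) (fun x => p x.1 * q x.2) := by
  refine ⟨?_, ?_, ?_⟩
  · rw [Matrix.conjTranspose_kronecker, ← Matrix.mul_kronecker_mul, h.left, h'.left]; simp
  · rw [Matrix.conjTranspose_kronecker, ← Matrix.mul_kronecker_mul, h.right, h'.right]; simp
  · have : Matrix.diagonal (fun x : ι × κ => ((p x.1 * q x.2 : ℝ) : ℂ))
        = Matrix.diagonal (fun i => (p i : ℂ)) ⊗ₖ Matrix.diagonal (fun i => (q i : ℂ)) := by
      rw [Matrix.diagonal_kronecker_diagonal]; simp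
    rw [this, Matrix.conjTranspose_kronecker, ← Matrix.mul_kronecker_mul,
      ← Matrix.mul_kronecker_mul, ← h.eq, ← h'.eq]

lemma entropy_kron_s5 {n m : Type*} [Fintype n] [Fintype m] {ρ : Matrix n n ℂ}
    {σ : Matrix m m ℂ} (h : IsState ρ) (h' : IsState σ) :
    vonNeumannEntropy (ρ ⊗ₖ σ) = vonNeumannEntropy ρ + vonNeumannEntropy σ := by
  have d := Diag.of_isHermitian h.1.1
  have d' := Diag.of_isHermitian h'.1.1
  have t := d.trace_eq
  have t' := d'.trace_eq
  have t1 : ∑ i, h.1.1.eigenvalues i = 1 := by exact_mod_cast t.symm.trans h.2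
  have t1' : ∑ i, h'.1.1.eigenvalues i = 1 := by exact_mod_cast t'.symm.trans h'.2
  rw [d.entropy, d'.entropy, (d.kron d').entropy, ← add_div]
  congr 1
  simp only [Real.negMulLog_mul, Finset.sum_add_distrib, Fintype.sum_prod_type]
  simp only [← Finset.sum_mul, ← Finset.mul_sum, t1, t1']
  simp

lemma entropy_kron_of {n m l : Type*} [Fintype n] [Fintype m] [Fintype l] {ρ : Matrix n n ℂ}
    {σ : Matrix m m ℂ} (h : IsState ρ) (h' : IsState σ) (τ : Matrix l l ℂ) (e : l ≃ n × m)
    (he : ∀ x y, τ x y = ρ (e x).1 (e y).1 * σ (e x).2 (e y).2) :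
    vonNeumannEntropy τ = vonNeumannEntropy ρ + vonNeumannEntropy σ := by
  rw [← entropy_kron_s5 h h']
  exact entropy_eq_of_equiv _ _ e he

lemma state_margAE {ω : Matrix (A × B × E) (A × B × E) ℂ} (h : IsState ω) :
    IsState (margAE ω) := by
  refine ⟨psd_margAE h.1, ?_⟩
  rw [← h.2]
  simp only [Matrix.trace, Matrix.diag, margAE, Fintype.sum_prod_type]
  refine Finset.sum_congr rfl fun a _ => ?_
  rw [Finset.sum_comm]

lemma state_margBE {ω : Matrix (A × B × E) (A × B × E) ℂ} (h : IsState ω) :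
    IsState (margBE ω) := by
  refine ⟨psd_margBE h.1, ?_⟩
  rw [← h.2]
  simp only [Matrix.trace, Matrix.diag, margBE]
  rw [Finset.sum_comm, ← Fintype.sum_prod_type']

lemma state_margE {ω : Matrix (A × B × E) (A × B × E) ℂ} (h : IsState ω) :
    IsState (margE ω) := by
  refine ⟨psd_margE h.1, ?_⟩
  rw [← h.2]
  simp only [Matrix.trace, Matrix.diag, margE, Fintype.sum_prod_type]
  rw [Finset.sum_comm]
  refine Finset.sum_congr rfl fun a _ => ?_
  rw [Finset.sum_comm]

lemma IsState.submatrix {n m : Type*} [Fintype n] [Fintype m] {ρ : Matrix n n ℂ}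
    (h : IsState ρ) (e : m ≃ n) : IsState (ρ.submatrix e e) := by
  refine ⟨h.1.submatrix e, ?_⟩
  rw [← h.2]
  simp only [Matrix.trace, Matrix.diag, Matrix.submatrix_apply]
  exact Equiv.sum_comp e (fun i => ρ i i)

lemma IsState.nonempty {n : Type*} [Fintype n] {ρ : Matrix n n ℂ} (h : IsState ρ) :
    Nonempty n := by
  by_contra hn
  rw [not_nonempty_iff] at hn
  have := h.2
  simp [Matrix.trace] at this

lemma condMutualInfo_nonneg' {ω : Matrix (A × B × E) (A × B × E) ℂ}
    (h : IsState ω) : 0 ≤ condMutualInfo ω := by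
  obtain ⟨a, b, _⟩ := h.nonempty
  have : Nonempty A := ⟨a⟩
  have : Nonempty B := ⟨b⟩
  exact condMutualInfo_nonneg h.1

lemma Esq_le {ρ : Matrix (A × B) (A × B) ℂ} {ω : Matrix (A × B × E) (A × B × E) ℂ}
    (h : IsState ω) (hm : margAB ω = ρ) : Esq ρ ≤ (1 / 2) * condMutualInfo ω := by
  apply csInf_le
  · refine ⟨0, ?_⟩
    rintro x ⟨d, ρE, h1, _, rfl⟩
    have := condMutualInfo_nonneg' h1
    positivity
  · let e : Fin (Fintype.card E) ≃ E := (Fintype.equivFin E).symm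
    let f : A × B × Fin (Fintype.card E) ≃ A × B × E :=
      (Equiv.refl A).prodCongr ((Equiv.refl B).prodCongr e)
    refine ⟨Fintype.card E, ω.submatrix f f, h.submatrix f, ?_, ?_⟩
    · rw [← hm]
      ext x y
      exact Equiv.sum_comp e (fun k => ω (x.1, x.2, k) (y.1, y.2, k))
    · have e1 : vonNeumannEntropy (margAE (ω.submatrix f f)) = vonNeumannEntropy (margAE ω) :=
        entropy_eq_of_equiv _ _ ((Equiv.refl A).prodCongr e) fun _ _ => rfl
      have e2 : vonNeumannEntropy (margBE (ω.submatrix f f)) = vonNeumannEntropy (margBE ω) :=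
        entropy_eq_of_equiv _ _ ((Equiv.refl B).prodCongr e) fun _ _ => rfl
      have e3 : vonNeumannEntropy (margE (ω.submatrix f f)) = vonNeumannEntropy (margE ω) :=
        entropy_eq_of_equiv _ _ e fun _ _ => rfl
      have e4 : vonNeumannEntropy (ω.submatrix f f) = vonNeumannEntropy ω :=
        entropy_submatrix _ _
      rw [condMutualInfo, condMutualInfo, e1, e2, e3, e4]

lemma Esq_set_nonempty {ρ : Matrix (A × B) (A × B) ℂ} (h : IsState ρ) :
    { x : ℝ | ∃ (d : ℕ) (ρE : Matrix (A × B × Fin d) (A × B × Fin d) ℂ),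
    IsState ρE ∧ margAB ρE = ρ ∧ x = (1 / 2) * condMutualInfo ρE }.Nonempty := by
  let f : A × B × Fin 1 ≃ A × B :=
    ⟨fun x => (x.1, x.2.1), fun x => (x.1, x.2, 0), fun x => by
      obtain ⟨a, b, k⟩ := x
      simp [Subsingleton.elim k 0], fun _ => rfl⟩
  refine ⟨_, 1, ρ.submatrix f f, h.submatrix f, ?_, rfl⟩
  ext x y
  simp [margAB, f]

end

section
variable {A B E A' B' E' : Type*} [Fintype A'] [Fintype B'] [Fintype E']
  [Fintype A] [Fintype B] [Fintype E]

/-- Rearrangement of the tensor factors. -/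
def shuf (A B E A' B' E' : Type*) :
    (A × A') × (B × B') × (E × E') ≃ (A × B × E) × (A' × B' × E') :=
  ⟨fun x => ((x.1.1, x.2.1.1, x.2.2.1), (x.1.2, x.2.1.2, x.2.2.2)),
   fun x => ((x.1.1, x.2.1), (x.1.2.1, x.2.2.1), (x.1.2.2, x.2.2.2)), fun _ => rfl, fun _ => rfl⟩

/-- Rearrangement of four tensor factors. -/
def shuf4 (A E A' E' : Type*) : (A × A') × (E × E') ≃ (A × E) × (A' × E') :=
  ⟨fun x => ((x.1.1, x.2.1), (x.1.2, x.2.2)),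
   fun x => ((x.1.1, x.2.1), (x.1.2, x.2.2)), fun _ => rfl, fun _ => rfl⟩

lemma IsState.kron {n m : Type*} [Fintype n] [Fintype m] {ρ : Matrix n n ℂ}
    {σ : Matrix m m ℂ} (h : IsState ρ) (h' : IsState σ) : IsState (ρ ⊗ₖ σ) := by
  refine ⟨h.1.kronecker h'.1, ?_⟩
  rw [Matrix.trace_kronecker, h.2, h'.2, one_mul]

lemma condMutualInfo_kron {ω : Matrix (A × B × E) (A × B × E) ℂ}
    {ω' : Matrix (A' × B' × E') (A' × B' × E') ℂ} (h : IsState ω) (h' : IsState ω') :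
    condMutualInfo ((ω ⊗ₖ ω').submatrix (shuf A B E A' B' E') (shuf A B E A' B' E'))
      = condMutualInfo ω + condMutualInfo ω' := by
  have e1 := entropy_kron_of (state_margAE h) (state_margAE h')
    (margAE ((ω ⊗ₖ ω').submatrix (shuf A B E A' B' E') (shuf A B E A' B' E')))
    (shuf4 A E A' E') (by
      intro x y
      simp only [margAE, Finset.sum_mul_sum, Fintype.sum_prod_type]
      rfl)
  have e2 := entropy_kron_of (state_margBE h) (state_margBE h')
    (margBE ((ω ⊗ₖ ω').submatrix (shuf A B E A' B' E') (shuf A B E A' B' E')))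
    (shuf4 B E B' E') (by
      intro x y
      simp only [margBE, Finset.sum_mul_sum, Fintype.sum_prod_type]
      rfl)
  have e3 := entropy_kron_of (state_margE h) (state_margE h')
    (margE ((ω ⊗ₖ ω').submatrix (shuf A B E A' B' E') (shuf A B E A' B' E')))
    (Equiv.refl _) (by
      intro x y
      simp only [margE, ← Fintype.sum_prod_type', Finset.sum_mul_sum]
      simp only [Fintype.sum_prod_type]
      refine Finset.sum_congr rfl fun a _ => ?_
      rw [Finset.sum_comm]
      rfl)
  have e4 := entropy_kron_of h h'
    ((ω ⊗ₖ ω').submatrix (shuf A B E A' B' E') (shuf A B E A' B' E'))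
    (shuf A B E A' B' E') (fun _ _ => rfl)
  rw [condMutualInfo, condMutualInfo, condMutualInfo, e1, e2, e3, e4]
  ring

lemma Esq_kron_le (ρ : Matrix (A × B) (A × B) ℂ) (ρ' : Matrix (A' × B') (A' × B') ℂ)
    (hρ : IsState ρ) (hρ' : IsState ρ') :
    Esq (Matrix.reindex (Equiv.prodProdProdComm A B A' B') (Equiv.prodProdProdComm A B A' B')
          (ρ ⊗ₖ ρ')) ≤ Esq ρ + Esq ρ' := by
  rw [← sub_le_iff_le_add]
  refine le_csInf (Esq_set_nonempty hρ) ?_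
  rintro x ⟨d, ω, h, hm, rfl⟩
  rw [sub_le_comm]
  refine le_csInf (Esq_set_nonempty hρ') ?_
  rintro x ⟨d', ω', h', hm', rfl⟩
  rw [sub_le_iff_le_add, ← mul_add, add_comm, ← condMutualInfo_kron h h']
  refine Esq_le ((h.kron h').submatrix _) ?_
  rw [← hm, ← hm']
  ext x y
  simp only [margAB, Fintype.sum_prod_type, Matrix.reindex_apply, Matrix.submatrix_apply,
    Matrix.kroneckerMap_apply, Finset.sum_mul_sum]
  rfl

lemma sum_three_swap (f : A → B → E → ℂ) :
    ∑ a, ∑ b, ∑ c, f a b c = ∑ c, ∑ b, ∑ a, f a b c := by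
  rw [Finset.sum_comm, Finset.sum_comm (s := Finset.univ (α := E))]
  exact Finset.sum_congr rfl fun b _ => Finset.sum_comm

/-- Chain rule plus strong subadditivity. -/
lemma Esq_add_le {ω : Matrix ((A × A') × (B × B') × E) ((A × A') × (B × B') × E) ℂ}
    (h : IsState ω) (ρ : Matrix (A × B) (A × B) ℂ) (ρ' : Matrix (A' × B') (A' × B') ℂ)
    (hρ : IsState ρ) (hρ' : IsState ρ')
    (hm : margAB ω = Matrix.reindex (Equiv.prodProdProdComm A B A' B')
      (Equiv.prodProdProdComm A B A' B') (ρ ⊗ₖ ρ')) :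
    Esq ρ + Esq ρ' ≤ (1 / 2) * condMutualInfo ω := by
  let fν : A' × B × (A × B' × E) ≃ (A × A') × (B × B') × E :=
    ⟨fun x => ((x.2.2.1, x.1), (x.2.1, x.2.2.2.1), x.2.2.2.2),
     fun x => (x.1.2, x.2.1.1, (x.1.1, x.2.1.2, x.2.2)), fun _ => rfl, fun _ => rfl⟩
  set ν := ω.submatrix fν fν with hν
  have sν : IsState ν := h.submatrix fν
  let fμ : A × B' × (B × E) ≃ B × (A × B' × E) :=
    ⟨fun x => (x.2.2.1, x.1, x.2.1, x.2.2.2),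
     fun x => (x.2.1, x.2.2.1, x.1, x.2.2.2), fun _ => rfl, fun _ => rfl⟩
  set μ := (margBE ν).submatrix fμ fμ with hμ
  have sμ : IsState μ := (state_margBE sν).submatrix fμ
  let f2 : A' × B' × (A × E) ≃ A' × (A × B' × E) :=
    ⟨fun x => (x.1, x.2.2.1, x.2.1, x.2.2.2),
     fun x => (x.1, x.2.2.1, x.2.1, x.2.2.2), fun _ => rfl, fun _ => rfl⟩
  set ω₂ := (margAE ν).submatrix f2 f2 with hω₂
  have s2 : IsState ω₂ := (state_margAE sν).submatrix f2
  let f1 : A × B × E ≃ A × (B × E) := Equiv.refl _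
  set ω₁ := (margAE μ).submatrix f1 f1 with hω₁
  have s1 : IsState ω₁ := (state_margAE sμ).submatrix f1
  have i3 := condMutualInfo_nonneg' sμ
  have i4 := condMutualInfo_nonneg' sν
  have m1 : margAB ω₁ = ρ := by
    have : ∀ x y, margAB ω₁ x y
        = ∑ a', ∑ b', margAB ω ((x.1, a'), (x.2, b')) ((y.1, a'), (y.2, b')) := fun x y =>
      sum_three_swap fun e b' a' => ω ((x.1, a'), (x.2, b'), e) ((y.1, a'), (y.2, b'), e)
    ext x y
    rw [this, hm]
    have h3 : ∑ a', ∑ b', ρ x y * ρ' (a', b') (a', b') = ρ x y := by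
      simp only [← Finset.mul_sum]
      rw [← Fintype.sum_prod_type' (f := fun a' b' => ρ' (a', b') (a', b'))]
      have := hρ'.2
      simp only [Matrix.trace, Matrix.diag] at this
      rw [this, mul_one]
    exact h3
  have m2 : margAB ω₂ = ρ' := by
    have : ∀ x y, margAB ω₂ x y
        = ∑ a, ∑ b, margAB ω ((a, x.1), (b, x.2)) ((a, y.1), (b, y.2)) := by
      intro x y
      simp only [margAB, Fintype.sum_prod_type]
      exact Finset.sum_congr rfl fun a _ => Finset.sum_comm (f := fun e b =>
        ω ((a, x.1), (b, x.2), e) ((a, y.1), (b, y.2), e))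
    ext x y
    rw [this, hm]
    have h3 : ∑ a, ∑ b, ρ (a, b) (a, b) * ρ' x y = ρ' x y := by
      simp only [← Finset.sum_mul]
      rw [← Fintype.sum_prod_type' (f := fun a b => ρ (a, b) (a, b))]
      have := hρ.2
      simp only [Matrix.trace, Matrix.diag] at this
      rw [this, one_mul]
    exact h3
  have g1 := Esq_le s1 m1
  have g2 := Esq_le s2 m2
  have c1 : vonNeumannEntropy (margAE ω) = vonNeumannEntropy (margAE ω₂) := by
    refine entropy_eq_of_equiv _ _ ⟨fun x => (x.1.2, x.1.1, x.2), fun x => ((x.2.1, x.1), x.2.2),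
      fun _ => rfl, fun _ => rfl⟩ fun x y => ?_
    simp only [margAE, hω₂, hν, Fintype.sum_prod_type]
    rw [Finset.sum_comm]
    rfl
  have c2 : vonNeumannEntropy (margBE ω) = vonNeumannEntropy (margBE μ) := by
    refine entropy_eq_of_equiv _ _ ⟨fun x => (x.1.2, x.1.1, x.2), fun x => ((x.2.1, x.1), x.2.2),
      fun _ => rfl, fun _ => rfl⟩ fun x y => ?_
    simp only [margBE, hμ, hν, Fintype.sum_prod_type]
    rfl
  have c3 : vonNeumannEntropy ω = vonNeumannEntropy ν := (entropy_submatrix _ _).symm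
  have c4 : vonNeumannEntropy (margE ω) = vonNeumannEntropy (margE ω₁) := by
    refine entropy_eq_of_equiv _ _ (Equiv.refl _) fun x y => ?_
    simp only [margE, Fintype.sum_prod_type]
    refine Finset.sum_congr rfl fun a _ => ?_
    rw [Finset.sum_comm]
    exact Finset.sum_congr rfl fun b _ => Finset.sum_comm (f := fun a' b' =>
      ω ((a, a'), (b, b'), x) ((a, a'), (b, b'), y))
  have c5 : vonNeumannEntropy (margAE ω₁) = vonNeumannEntropy (margE ω₂) := by
    refine entropy_eq_of_equiv _ _ (Equiv.refl _) fun x y => ?_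
    exact sum_three_swap fun b b' a' =>
      ω ((x.1, a'), (b, b'), x.2) ((y.1, a'), (b, b'), y.2)
  have c6 : vonNeumannEntropy (margBE ω₁) = vonNeumannEntropy (margE μ) := by
    refine entropy_eq_of_equiv _ _ (Equiv.refl _) fun x y => ?_
    simp only [margE, hω₁, margAE, margBE]
    rfl
  have c7 : vonNeumannEntropy ω₁ = vonNeumannEntropy (margAE μ) := entropy_submatrix _ _
  have c8 : vonNeumannEntropy (margBE ω₂) = vonNeumannEntropy (margE ν) := by
    refine entropy_eq_of_equiv _ _ ⟨fun x => (x.2.1, x.1, x.2.2), fun x => (x.2.1, x.1, x.2.2),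
      fun _ => rfl, fun _ => rfl⟩ fun x y => ?_
    simp only [margE, hω₂, margAE, margBE]
    rfl
  have c9 : vonNeumannEntropy ω₂ = vonNeumannEntropy (margAE ν) := entropy_submatrix _ _
  have c10 : vonNeumannEntropy μ = vonNeumannEntropy (margBE ν) := entropy_submatrix _ _
  simp only [condMutualInfo] at g1 g2 i3 i4 ⊢
  linarith

end

/-- Squashed entanglement is additive on tensor products:
`E_sq(ρ^{AB} ⊗ ρ^{A'B'}) = E_sq(ρ^{AB}) + E_sq(ρ^{A'B'})`, where the tensor product is
regarded as a bipartite state with respect to the cut `AA'` versus `BB'`. -/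
theorem squashedEntanglement_additive_tensor
    {A A' B B' : Type*} [Fintype A] [Fintype A'] [Fintype B] [Fintype B']
    (ρ : Matrix (A × B) (A × B) ℂ) (ρ' : Matrix (A' × B') (A' × B') ℂ)
    (hρ : IsState ρ) (hρ' : IsState ρ') :
    Esq (Matrix.reindex (Equiv.prodProdProdComm A B A' B') (Equiv.prodProdProdComm A B A' B')
          (ρ ⊗ₖ ρ'))
      = Esq ρ + Esq ρ' := by
  refine le_antisymm (Esq_kron_le ρ ρ' hρ hρ') ?_
  refine le_csInf (Esq_set_nonempty ((hρ.kron hρ').submatrix _)) ?_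
  rintro x ⟨d, ω, h, hm, rfl⟩
  exact Esq_add_le h ρ ρ' hρ hρ' hm

end
end

section
/- Squashed entanglement is upper bounded by entanglement of formation: for every state ρ^{AB} on H_A ⊗ H_B and every finite pure-state ensemble {(p_k, |Ψ_k⟩)} with p_k ≥ 0, ∑_k p_k = 1, |Ψ_k⟩ unit vectors in H_A ⊗ H_B, and ∑_k p_k |Ψ_k⟩⟨Ψ_k| = ρ^{AB}, one has E_sq(ρ^{AB}) ≤ ∑_k p_k S(Tr_B |Ψ_k⟩⟨Ψ_k|). Consequently E_sq(ρ^{AB}) ≤ E_F(ρ^{AB}), the infimum of the right hand side over all such ensembles. -/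
open Matrix BigOperators Kronecker
open scoped Classical ComplexOrder

noncomputable section

variable {A B E : Type*} [Fintype A] [Fintype B] [Fintype E]

/-- The summand of the entropy, as a function of a complex eigenvalue. -/
def entTerm (z : ℂ) : ℝ := -(z.re * Real.logb 2 z.re)

/-- Entropy read off from the roots of a polynomial. -/
def rootEnt (P : Polynomial ℂ) : ℝ := (P.roots.map entTerm).sum

lemma entropy_eq_rootEnt {n : Type*} [Fintype n] [d : DecidableEq n] (M : Matrix n n ℂ)
    (h : M.IsHermitian) : vonNeumannEntropy M = rootEnt M.charpoly := by
  have : d = fun a b => Classical.propDecidable _ := Subsingleton.elim _ _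
  subst this
  rw [vonNeumannEntropy, dif_pos h, rootEnt, h.roots_charpoly_eq_eigenvalues]
  rw [Multiset.map_map]
  exact Finset.sum_congr rfl fun i _ => by simp [entTerm]

lemma rootEnt_mul {P Q : Polynomial ℂ} (hP : P ≠ 0) (hQ : Q ≠ 0) :
    rootEnt (P * Q) = rootEnt P + rootEnt Q := by
  simp [rootEnt, Polynomial.roots_mul (mul_ne_zero hP hQ)]

lemma rootEnt_prod {ι : Type*} (s : Finset ι) (P : ι → Polynomial ℂ) (h : ∀ i, P i ≠ 0) :
    rootEnt (∏ i ∈ s, P i) = ∑ i ∈ s, rootEnt (P i) := by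
  induction s using Finset.induction_on with
  | empty => simp [rootEnt]
  | insert a s ha ih =>
    rw [Finset.prod_insert ha, Finset.sum_insert ha, rootEnt_mul (h a)
      (Finset.prod_ne_zero_iff.2 fun i _ => h i), ih]

lemma rootEnt_X_pow (k : ℕ) : rootEnt (Polynomial.X ^ k) = 0 := by
  simp [rootEnt, entTerm, Multiset.map_nsmul, Multiset.sum_nsmul]

lemma rootEnt_prod_X_sub_C {ι : Type*} [Fintype ι] (d : ι → ℂ) :
    rootEnt (∏ i, (Polynomial.X - Polynomial.C (d i))) = ∑ i, entTerm (d i) := by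
  rw [rootEnt_prod _ _ fun i => Polynomial.X_sub_C_ne_zero _]
  simp [rootEnt]

lemma rootEnt_mul_comm {m n : Type*} [Fintype m] [Fintype n] [DecidableEq m] [DecidableEq n]
    (M : Matrix m n ℂ) (N : Matrix n m ℂ) :
    rootEnt (M * N).charpoly = rootEnt (N * M).charpoly := by
  have h := congrArg rootEnt (Matrix.charpoly_mul_comm' M N)
  rw [rootEnt_mul (pow_ne_zero _ Polynomial.X_ne_zero) (Matrix.charpoly_monic _).ne_zero,
    rootEnt_mul (pow_ne_zero _ Polynomial.X_ne_zero) (Matrix.charpoly_monic _).ne_zero,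
    rootEnt_X_pow, rootEnt_X_pow] at h
  simpa using h

lemma charpoly_blockDiag {m o : Type*} [Fintype m] [Fintype o] [DecidableEq m] [DecidableEq o]
    (M : o → Matrix m m ℂ) : (blockDiagonal M).charpoly = ∏ k, (M k).charpoly := by
  simp only [Matrix.charpoly]
  rw [← Matrix.det_blockDiagonal]
  congr 1
  ext ⟨i, k⟩ ⟨j, l⟩ : 2
  by_cases hk : k = l
  · subst hk
    by_cases hi : i = j
    · subst hi; simp [charmatrix_apply, blockDiagonal_apply]
    · simp [charmatrix_apply, blockDiagonal_apply, hi]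
  · simp [charmatrix_apply, blockDiagonal_apply, hk]

lemma entropy_blockDiag {m o : Type*} [Fintype m] [Fintype o] [DecidableEq o]
    (M : o → Matrix m m ℂ) (h : ∀ k, (M k).IsHermitian) :
    vonNeumannEntropy (blockDiagonal M) = ∑ k, vonNeumannEntropy (M k) := by
  have hb : (blockDiagonal M).IsHermitian := by
    rw [Matrix.IsHermitian, blockDiagonal_conjTranspose]
    congr 1; funext k; exact h k
  rw [entropy_eq_rootEnt _ hb, charpoly_blockDiag,
    rootEnt_prod _ _ fun i => (Matrix.charpoly_monic _).ne_zero]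
  exact Finset.sum_congr rfl fun k _ => (entropy_eq_rootEnt _ (h k)).symm

lemma entropy_diag {o : Type*} [Fintype o] [DecidableEq o] (p : o → ℝ) :
    vonNeumannEntropy (diagonal fun k => (p k : ℂ)) = ∑ k, entTerm (p k) := by
  rw [entropy_eq_rootEnt, charpoly_diagonal, rootEnt_prod_X_sub_C]
  apply Matrix.isHermitian_diagonal_of_self_adjoint
  ext k; simp

lemma entTerm_mul (p x : ℝ) :
    entTerm ((p : ℂ) * (x : ℂ)) = p * entTerm x + x * entTerm p := by
  simp only [entTerm, ← Complex.ofReal_mul, Complex.ofReal_re]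
  rcases eq_or_ne p 0 with rfl | hp
  · simp
  rcases eq_or_ne x 0 with rfl | hx
  · simp
  rw [Real.logb_mul hp hx]; ring

lemma isHermitian_real_smul {n : Type*} {M : Matrix n n ℂ} (h : M.IsHermitian) (p : ℝ) :
    ((p : ℂ) • M).IsHermitian := by
  rw [Matrix.IsHermitian, conjTranspose_smul, h.eq]; simp

lemma sum_eigenvalues_eq_one {n : Type*} [Fintype n] [DecidableEq n] (M : Matrix n n ℂ)
    (h : M.IsHermitian) (ht : M.trace = 1) : ∑ i, h.eigenvalues i = 1 := by
  have h2 := h.trace_eq_sum_eigenvalues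
  rw [ht] at h2
  apply Complex.ofReal_injective
  rw [Complex.ofReal_sum, Complex.ofReal_one, h2]
  rfl

lemma entropy_smul {n : Type*} [Fintype n] (M : Matrix n n ℂ) (h : M.IsHermitian) (p : ℝ)
    (ht : M.trace = 1) :
    vonNeumannEntropy ((p : ℂ) • M) = p * vonNeumannEntropy M + entTerm p := by
  have hc : ((p : ℂ) • M).charpoly
      = ∏ i, (Polynomial.X - Polynomial.C ((p : ℂ) * (h.eigenvalues i : ℂ))) := by
    conv_lhs => rw [h.spectral_theorem, Unitary.conjStarAlgAut_apply, ← smul_mul_assoc,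
      charpoly_mul_comm, ← mul_smul_comm, ← mul_assoc]
    rw [Unitary.coe_star_mul_self, one_mul, ← diagonal_smul, charpoly_diagonal]
    rfl
  have hs : ∑ i, h.eigenvalues i = 1 := sum_eigenvalues_eq_one M h ht
  rw [entropy_eq_rootEnt _ (isHermitian_real_smul h p), hc, rootEnt_prod_X_sub_C]
  simp only [entTerm_mul, Finset.sum_add_distrib, ← Finset.sum_mul, ← Finset.mul_sum, hs]
  rw [vonNeumannEntropy, dif_pos h]
  simp [entTerm]

lemma entropy_nonneg {n : Type*} [Fintype n] (M : Matrix n n ℂ) (h : IsState M) :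
    0 ≤ vonNeumannEntropy M := by
  rw [vonNeumannEntropy, dif_pos h.1.1]
  have hs : ∑ i, h.1.1.eigenvalues i = 1 := sum_eigenvalues_eq_one M h.1.1 h.2
  have h0 := h.1.eigenvalues_nonneg
  refine Finset.sum_nonneg fun i _ => ?_
  have h1 : h.1.1.eigenvalues i ≤ 1 := by
    rw [← hs]; exact Finset.single_le_sum (fun j _ => h0 j) (Finset.mem_univ i)
  have : Real.logb 2 (h.1.1.eigenvalues i) ≤ 0 :=
    Real.logb_nonpos (by norm_num) (h0 i) h1
  have := mul_nonpos_of_nonneg_of_nonpos (h0 i) this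
  linarith

lemma norm_sum_dot {n : Type*} [Fintype n] (ψ : n → ℂ) (h : ∑ i, ‖ψ i‖ ^ 2 = 1) :
    ∑ i, ψ i * star (ψ i) = 1 := by
  have : ((∑ i, ‖ψ i‖ ^ 2 : ℝ) : ℂ) = 1 := by rw [h]; simp
  rw [← this]
  push_cast
  exact Finset.sum_congr rfl fun i _ => by
    rw [← Complex.mul_conj']; rfl

lemma outer_posSemidef {n : Type*} [Fintype n] (ψ : n → ℂ) : (outer ψ).PosSemidef :=
  posSemidef_vecMulVec_self_star ψ

lemma outer_isState {n : Type*} [Fintype n] (ψ : n → ℂ) (h : ∑ i, ‖ψ i‖ ^ 2 = 1) :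
    IsState (outer ψ) :=
  ⟨outer_posSemidef ψ, by
    simpa [outer, Matrix.trace, vecMulVec_apply] using norm_sum_dot ψ h⟩

lemma entropy_outer {n : Type*} [Fintype n] (ψ : n → ℂ) (h : ∑ i, ‖ψ i‖ ^ 2 = 1) :
    vonNeumannEntropy (outer ψ) = 0 := by
  rw [entropy_eq_rootEnt _ (outer_posSemidef ψ).1, outer, vecMulVec_eq (ι := Unit),
    rootEnt_mul_comm]
  have : replicateRow Unit (star ψ) * replicateCol Unit ψ = diagonal fun _ => (1 : ℂ) := by
    ext i j
    simp only [Matrix.mul_apply, replicateRow_apply, replicateCol_apply, Pi.star_apply]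
    rw [diagonal_apply, if_pos (Subsingleton.elim _ _), ← norm_sum_dot ψ h]
    exact Finset.sum_congr rfl fun i _ => mul_comm _ _
  rw [this, charpoly_diagonal, rootEnt_prod_X_sub_C]
  simp [entTerm]

/-- The coefficient matrix of a bipartite vector. -/
def coeffMat {X Y : Type*} (ψ : X × Y → ℂ) : Matrix X Y ℂ := fun a b => ψ (a, b)

lemma ptraceR_outer {X Y : Type*} [Fintype X] [Fintype Y] (ψ : X × Y → ℂ) :
    ptraceR (outer ψ) = coeffMat ψ * (coeffMat ψ)ᴴ := by
  ext i j
  simp [ptraceR, outer, vecMulVec_apply, Matrix.mul_apply, coeffMat]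

lemma ptraceL_outer {X Y : Type*} [Fintype X] [Fintype Y] (ψ : X × Y → ℂ) :
    ptraceL (outer ψ) = ((coeffMat ψ)ᴴ * coeffMat ψ)ᵀ := by
  ext i j
  simp [ptraceL, outer, vecMulVec_apply, Matrix.mul_apply, coeffMat, mul_comm]

lemma ptraceR_isState {X Y : Type*} [Fintype X] [Fintype Y] (ψ : X × Y → ℂ)
    (h : ∑ i, ‖ψ i‖ ^ 2 = 1) : IsState (ptraceR (outer ψ)) := by
  refine ⟨?_, ?_⟩
  · rw [ptraceR_outer]; exact posSemidef_self_mul_conjTranspose _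
  · rw [← norm_sum_dot ψ h, Fintype.sum_prod_type]
    simp [Matrix.trace, ptraceR, outer, vecMulVec_apply]

lemma ptraceL_isState {X Y : Type*} [Fintype X] [Fintype Y] (ψ : X × Y → ℂ)
    (h : ∑ i, ‖ψ i‖ ^ 2 = 1) : IsState (ptraceL (outer ψ)) := by
  refine ⟨?_, ?_⟩
  · rw [ptraceL_outer]; exact (posSemidef_conjTranspose_mul_self _).transpose
  · rw [← norm_sum_dot ψ h, Fintype.sum_prod_type_right]
    simp [Matrix.trace, ptraceL, outer, vecMulVec_apply]

lemma entropy_ptraceL_eq {X Y : Type*} [Fintype X] [Fintype Y] (ψ : X × Y → ℂ)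
    (h : ∑ i, ‖ψ i‖ ^ 2 = 1) :
    vonNeumannEntropy (ptraceL (outer ψ)) = vonNeumannEntropy (ptraceR (outer ψ)) := by
  rw [entropy_eq_rootEnt _ (ptraceL_isState ψ h).1.1, entropy_eq_rootEnt _
    (ptraceR_isState ψ h).1.1, ptraceL_outer, ptraceR_outer, charpoly_transpose,
    rootEnt_mul_comm]

/-- The extension `∑ p_k |ψ_k⟩⟨ψ_k| ⊗ |k⟩⟨k|`, up to reassociation. -/
def blockExt {X Y : Type*} {n : ℕ} (p : Fin n → ℝ) (ψ : Fin n → X × Y → ℂ) :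
    Matrix ((X × Y) × Fin n) ((X × Y) × Fin n) ℂ :=
  blockDiagonal fun k => (p k : ℂ) • outer (ψ k)

/-- The extension `∑ p_k |ψ_k⟩⟨ψ_k| ⊗ |k⟩⟨k|`. -/
def extM {X Y : Type*} {n : ℕ} (p : Fin n → ℝ) (ψ : Fin n → X × Y → ℂ) :
    Matrix (X × Y × Fin n) (X × Y × Fin n) ℂ :=
  reindex (Equiv.prodAssoc X Y (Fin n)) (Equiv.prodAssoc X Y (Fin n)) (blockExt p ψ)

lemma extM_apply {X Y : Type*} {n : ℕ} (p : Fin n → ℝ) (ψ : Fin n → X × Y → ℂ)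
    (a a' : X) (b b' : Y) (k k' : Fin n) :
    extM p ψ (a, b, k) (a', b', k')
      = if k = k' then (p k : ℂ) * outer (ψ k) (a, b) (a', b') else 0 := by
  simp [extM, blockExt, blockDiagonal_apply]

lemma blockDiagonal_posSemidef {m o : Type*} [Fintype m] [Fintype o] [DecidableEq o]
    (M : o → Matrix m m ℂ) (h : ∀ k, (M k).PosSemidef) : (blockDiagonal M).PosSemidef := by
  have h' : ∀ k, ∃ N : Matrix m m ℂ, M k = Nᴴ * N := fun k => by
    open scoped MatrixOrder in
    exact CStarAlgebra.nonneg_iff_eq_star_mul_self.1 (Matrix.nonneg_iff_posSemidef.2 (h k))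
  choose N hN using h'
  have : M = fun k => (N k)ᴴ * N k := funext hN
  rw [this, blockDiagonal_mul (fun k => (N k)ᴴ) N, ← blockDiagonal_conjTranspose]
  exact posSemidef_conjTranspose_mul_self _

section
variable {X Y : Type*} [Fintype X] [Fintype Y] {n : ℕ} (p : Fin n → ℝ) (ψ : Fin n → X × Y → ℂ)

lemma extM_isState (hp : ∀ k, 0 ≤ p k) (hp1 : ∑ k, p k = 1)
    (hψ : ∀ k, ∑ i, ‖ψ k i‖ ^ 2 = 1) : IsState (extM p ψ) := by
  refine ⟨?_, ?_⟩
  · refine Matrix.PosSemidef.submatrix (blockDiagonal_posSemidef _ fun k => ?_) _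
    exact (outer_posSemidef _).smul (by exact_mod_cast hp k)
  · have : (extM p ψ).trace = (blockExt p ψ).trace := by
      simp only [Matrix.trace, extM]
      exact Fintype.sum_equiv (Equiv.prodAssoc X Y (Fin n)).symm _ _ fun x => rfl
    rw [this, blockExt, trace_blockDiagonal]
    simp only [trace_smul, (outer_isState _ (hψ _)).2]
    simp only [smul_eq_mul, mul_one]
    exact_mod_cast hp1

lemma margAB_extM : margAB (extM p ψ) = ∑ k, (p k : ℂ) • outer (ψ k) := by
  ext ⟨a, b⟩ ⟨a', b'⟩
  simp [margAB, extM_apply, Matrix.sum_apply]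

lemma margAE_extM :
    margAE (extM p ψ) = blockDiagonal fun k => (p k : ℂ) • ptraceR (outer (ψ k)) := by
  ext ⟨a, k⟩ ⟨a', k'⟩
  simp only [margAE, extM_apply, blockDiagonal_apply, Matrix.smul_apply, ptraceR, smul_eq_mul]
  split_ifs <;> simp [Finset.mul_sum]

lemma margBE_extM :
    margBE (extM p ψ) = blockDiagonal fun k => (p k : ℂ) • ptraceL (outer (ψ k)) := by
  ext ⟨a, k⟩ ⟨a', k'⟩
  simp only [margBE, extM_apply, blockDiagonal_apply, Matrix.smul_apply, ptraceL, smul_eq_mul]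
  split_ifs <;> simp [Finset.mul_sum]

lemma margE_extM (hψ : ∀ k, ∑ i, ‖ψ k i‖ ^ 2 = 1) :
    margE (extM p ψ) = diagonal fun k => (p k : ℂ) := by
  ext k k'
  simp only [margE, extM_apply, diagonal_apply]
  split_ifs
  · simp only [← Finset.mul_sum]
    rw [← Fintype.sum_prod_type' (f := fun a b => outer (ψ k) (a, b) (a, b))]
    have := (outer_isState _ (hψ k)).2
    simp only [Matrix.trace, diag_apply] at this
    simp [this]
  · simp

lemma entropy_extM (hp : ∀ k, 0 ≤ p k) (hp1 : ∑ k, p k = 1) (hψ : ∀ k, ∑ i, ‖ψ k i‖ ^ 2 = 1) :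
    vonNeumannEntropy (extM p ψ) = ∑ k, entTerm (p k) := by
  have hh : ∀ k, ((p k : ℂ) • outer (ψ k)).IsHermitian := fun k =>
    isHermitian_real_smul (outer_posSemidef _).1 _
  have h1 : vonNeumannEntropy (blockExt p ψ) = ∑ k, entTerm (p k) := by
    rw [blockExt, entropy_blockDiag _ hh]
    refine Finset.sum_congr rfl fun k _ => ?_
    rw [entropy_smul _ (outer_posSemidef _).1 _ (outer_isState _ (hψ k)).2,
      entropy_outer _ (hψ k)]
    simp
  have hb : (blockExt p ψ).IsHermitian :=
    (blockDiagonal_posSemidef _ fun k =>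
      (outer_posSemidef (ψ k)).smul (by exact_mod_cast hp k)).1
  rw [← h1, entropy_eq_rootEnt _ (extM_isState p ψ hp hp1 hψ).1.1, entropy_eq_rootEnt _ hb,
    extM, charpoly_reindex]

lemma condMutualInfo_extM (hp : ∀ k, 0 ≤ p k) (hp1 : ∑ k, p k = 1)
    (hψ : ∀ k, ∑ i, ‖ψ k i‖ ^ 2 = 1) :
    condMutualInfo (extM p ψ) = 2 * ∑ k, p k * vonNeumannEntropy (ptraceR (outer (ψ k))) := by
  have hR := fun k => ptraceR_isState _ (hψ k)
  have hL := fun k => ptraceL_isState _ (hψ k)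
  rw [condMutualInfo, entropy_extM p ψ hp hp1 hψ, margE_extM p ψ hψ, entropy_diag,
    margAE_extM, margBE_extM,
    entropy_blockDiag _ fun k => isHermitian_real_smul (hR k).1.1 _,
    entropy_blockDiag _ fun k => isHermitian_real_smul (hL k).1.1 _]
  have e1 : ∀ k, vonNeumannEntropy ((p k : ℂ) • ptraceR (outer (ψ k)))
      = p k * vonNeumannEntropy (ptraceR (outer (ψ k))) + entTerm (p k) := fun k =>
    entropy_smul _ (hR k).1.1 _ (hR k).2
  have e2 : ∀ k, vonNeumannEntropy ((p k : ℂ) • ptraceL (outer (ψ k)))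
      = p k * vonNeumannEntropy (ptraceR (outer (ψ k))) + entTerm (p k) := fun k => by
    rw [entropy_smul _ (hL k).1.1 _ (hL k).2, entropy_ptraceL_eq _ (hψ k)]
  simp only [e1, e2, Finset.sum_add_distrib]
  ring

end

lemma Esq_le_ensemble {X Y : Type*} [Fintype X] [Fintype Y] (ρ : Matrix (X × Y) (X × Y) ℂ)
    (n : ℕ) (p : Fin n → ℝ) (ψ : Fin n → X × Y → ℂ)
    (hp : ∀ k, 0 ≤ p k) (hp1 : ∑ k, p k = 1) (hψ : ∀ k, ∑ i, ‖ψ k i‖ ^ 2 = 1)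
    (h : (∑ k, (p k : ℂ) • outer (ψ k)) = ρ) :
    Esq ρ ≤ ∑ k, p k * vonNeumannEntropy (ptraceR (outer (ψ k))) := by
  rw [Esq]
  by_cases hb : BddBelow { x : ℝ | ∃ (d : ℕ) (ρE : Matrix (X × Y × Fin d) (X × Y × Fin d) ℂ),
    IsState ρE ∧ margAB ρE = ρ ∧ x = (1 / 2) * condMutualInfo ρE }
  · refine csInf_le hb ⟨n, extM p ψ, extM_isState p ψ hp hp1 hψ, ?_, ?_⟩
    · rw [margAB_extM, h]
    · rw [condMutualInfo_extM p ψ hp hp1 hψ]; ring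
  · rw [Real.sInf_of_not_bddBelow hb]
    exact Finset.sum_nonneg fun k _ =>
      mul_nonneg (hp k) (entropy_nonneg _ (ptraceR_isState _ (hψ k)))

lemma exists_ensemble {m : Type*} [Fintype m] (ρ : Matrix m m ℂ) (hρ : IsState ρ) :
    ∃ (n : ℕ) (p : Fin n → ℝ) (ψ : Fin n → m → ℂ),
      (∀ k, 0 ≤ p k) ∧ (∑ k, p k) = 1 ∧ (∀ k, ∑ i, ‖ψ k i‖ ^ 2 = 1) ∧
      (∑ k, (p k : ℂ) • outer (ψ k)) = ρ := by
  have h := hρ.1.1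
  let e := (Fintype.equivFin m).symm
  refine ⟨Fintype.card m, fun k => h.eigenvalues (e k), fun k => ⇑(h.eigenvectorBasis (e k)),
    fun k => hρ.1.eigenvalues_nonneg _, ?_, fun k => ?_, ?_⟩
  · rw [Equiv.sum_comp e h.eigenvalues]
    exact sum_eigenvalues_eq_one ρ h hρ.2
  · rw [← EuclideanSpace.norm_sq_eq, h.eigenvectorBasis.orthonormal.1]; simp
  · rw [Equiv.sum_comp e fun i => (h.eigenvalues i : ℂ) • outer ⇑(h.eigenvectorBasis i)]
    conv_rhs => rw [h.spectral_theorem, Unitary.conjStarAlgAut_apply]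
    ext i j
    rw [Matrix.mul_apply, Matrix.sum_apply]
    refine Finset.sum_congr rfl fun k _ => ?_
    simp [outer, vecMulVec_apply, mul_diagonal, star_apply]
    ring

/-- Squashed entanglement is upper bounded by entanglement of formation:
for every pure-state ensemble for `ρ^{AB}`, `E_sq(ρ^{AB})` is at most the average
entanglement entropy of the ensemble; consequently `E_sq(ρ^{AB}) ≤ E_F(ρ^{AB})`. -/
theorem squashedEntanglement_le_entanglementOfFormation
    {A B : Type*} [Fintype A] [Fintype B]
    (ρ : Matrix (A × B) (A × B) ℂ) (hρ : IsState ρ) :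
    (∀ (n : ℕ) (p : Fin n → ℝ) (ψ : Fin n → A × B → ℂ),
        (∀ k, 0 ≤ p k) → (∑ k, p k) = 1 → (∀ k, ∑ i, ‖ψ k i‖ ^ 2 = 1) →
        (∑ k, (p k : ℂ) • outer (ψ k)) = ρ →
        Esq ρ ≤ ∑ k, p k * vonNeumannEntropy (ptraceR (outer (ψ k)))) ∧
    Esq ρ ≤ EoF ρ := by
  refine ⟨fun n p ψ hp hp1 hψ h => Esq_le_ensemble ρ n p ψ hp hp1 hψ h, ?_⟩
  rw [EoF]
  refine le_csInf ?_ ?_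
  · obtain ⟨n, p, ψ, h1, h2, h3, h4⟩ := exists_ensemble ρ hρ
    exact ⟨_, n, p, ψ, h1, h2, h3, h4, rfl⟩
  · rintro x ⟨n, p, ψ, h1, h2, h3, h4, rfl⟩
    exact Esq_le_ensemble ρ n p ψ h1 h2 h3 h4

end
end
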